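/- arXiv:2103.01704 — 4 statements merged into one kernel-verified Lean document; each statement's English description precedes it below -/
import Mathlib

section
/- For every positive integer n there exists a semigroup identity u = v (a pair of distinct words over a two-letter alphabet) that is satisfied by UT_n(T) but not by UT_{n+1}(T). Consequently UT_n(T) and UT_{n+1}(T) generate different semigroup varieties. -/
/-- The tropical (max-plus) semiring `ℝ ∪ {-∞}`: `⊥` is `-∞`,
`Finset.sup` is tropical sum (max), `+` is tropical product. -/
abbrev Trop := WithBot ℝ

/-- Tropical (max-plus) matrix multiplication: `(X*Y) i j = max_k (X i k + Y k j)`. -/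
def tmul {ι : Type*} [Fintype ι] (X Y : Matrix ι ι Trop) : Matrix ι ι Trop :=
  fun i j => Finset.univ.sup fun k => X i k + Y k j

/-- The tropical identity matrix: `0` on the diagonal, `-∞` elsewhere. -/
def tId (ι : Type*) [DecidableEq ι] : Matrix ι ι Trop :=
  fun i j => if i = j then (0 : Trop) else ⊥

/-- Upper triangular tropical matrices: `-∞` below the diagonal. -/
def IsUT {n : ℕ} (X : Matrix (Fin n) (Fin n) Trop) : Prop :=
  ∀ i j : Fin n, (j : ℕ) < (i : ℕ) → X i j = ⊥

/-- Evaluation of a word over the alphabet `{a, b}` (encoded as `Bool`,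
with `a = true`, `b = false`) at matrices `X, Y` (substituting `a ↦ X`, `b ↦ Y`),
using tropical matrix multiplication. -/
def evalWord {ι : Type*} [Fintype ι] [DecidableEq ι] (w : List Bool)
    (X Y : Matrix ι ι Trop) : Matrix ι ι Trop :=
  (w.map fun c => if c then X else Y).foldr tmul (tId ι)

/-- Substitution of words into a word: `subst w x y = w[x, y]`
(replace each `a = true` by the word `x` and each `b = false` by `y`). -/
def subst (w x y : List Bool) : List Bool :=
  w.flatMap fun c => if c then x else y

theorem le_tmul {ι : Type*} [Fintype ι] (X Y : Matrix ι ι Trop) (i k j : ι) :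
    X i k + Y k j ≤ tmul X Y i j :=
  Finset.le_sup (f := fun k => X i k + Y k j) (Finset.mem_univ k)

theorem tmul_le {ι : Type*} [Fintype ι] (X Y : Matrix ι ι Trop) (i j : ι) (a : Trop)
    (h : ∀ k, X i k + Y k j ≤ a) : tmul X Y i j ≤ a :=
  Finset.sup_le fun k _ => h k

theorem tmul_attained {ι : Type*} [Fintype ι] (X Y : Matrix ι ι Trop) (i j : ι) :
    ∃ k, tmul X Y i j = X i k + Y k j := by
  obtain ⟨k, -, hk⟩ := Finset.exists_mem_eq_sup (Finset.univ : Finset ι) ⟨i, Finset.mem_univ i⟩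
    (fun k => X i k + Y k j)
  exact ⟨k, hk⟩

theorem tmul_assoc {ι : Type*} [Fintype ι] (X Y Z : Matrix ι ι Trop) :
    tmul (tmul X Y) Z = tmul X (tmul Y Z) := by
  funext i j
  apply le_antisymm
  · apply tmul_le
    intro k
    obtain ⟨l, hl⟩ := tmul_attained X Y i k
    rw [hl, add_assoc]
    exact (add_le_add le_rfl (le_tmul Y Z l k j)).trans (le_tmul X (tmul Y Z) i l j)
  · apply tmul_le
    intro k
    obtain ⟨l, hl⟩ := tmul_attained Y Z k j
    rw [hl, ← add_assoc]
    exact (add_le_add (le_tmul X Y i k l) le_rfl).trans (le_tmul (tmul X Y) Z i l j)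

theorem tId_tmul {ι : Type*} [Fintype ι] [DecidableEq ι] (X : Matrix ι ι Trop) :
    tmul (tId ι) X = X := by
  funext i j
  apply le_antisymm
  · apply tmul_le
    intro k
    by_cases h : i = k
    · subst h; simp [tId]
    · simp [tId, h]
  · have := le_tmul (tId ι) X i i j
    simpa [tId] using this

theorem evalWord_nil {ι : Type*} [Fintype ι] [DecidableEq ι] (X Y : Matrix ι ι Trop) :
    evalWord [] X Y = tId ι := rfl

theorem evalWord_cons {ι : Type*} [Fintype ι] [DecidableEq ι] (c : Bool) (w : List Bool)
    (X Y : Matrix ι ι Trop) :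
    evalWord (c :: w) X Y = tmul (if c then X else Y) (evalWord w X Y) := rfl

theorem evalWord_append {ι : Type*} [Fintype ι] [DecidableEq ι] (u v : List Bool)
    (X Y : Matrix ι ι Trop) :
    evalWord (u ++ v) X Y = tmul (evalWord u X Y) (evalWord v X Y) := by
  induction u with
  | nil => simp [evalWord_nil, tId_tmul]
  | cons c u ih => rw [List.cons_append, evalWord_cons, evalWord_cons, ih, tmul_assoc]

theorem evalWord_tId {ι : Type*} [Fintype ι] [DecidableEq ι] (u : List Bool) :
    evalWord u (tId ι) (tId ι) = tId ι := by
  induction u with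
  | nil => rfl
  | cons c u ih => rw [evalWord_cons, ih, ite_self, tId_tmul]

theorem IsUT_tId (n : ℕ) : IsUT (tId (Fin n)) := by
  intro i j h
  have : i ≠ j := by rintro rfl; exact lt_irrefl _ h
  simp [tId, this]

theorem IsUT_tmul {n : ℕ} {X Y : Matrix (Fin n) (Fin n) Trop} (hX : IsUT X) (hY : IsUT Y) :
    IsUT (tmul X Y) := by
  intro i j h
  rw [← le_bot_iff]
  apply tmul_le
  intro k
  rcases lt_or_ge (k : ℕ) (i : ℕ) with h1 | h1
  · simp [hX i k h1]
  · simp [hY k j (lt_of_lt_of_le h h1)]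

theorem IsUT_evalWord {n : ℕ} {X Y : Matrix (Fin n) (Fin n) Trop} (hX : IsUT X) (hY : IsUT Y)
    (w : List Bool) : IsUT (evalWord w X Y) := by
  induction w with
  | nil => exact IsUT_tId n
  | cons c w ih =>
    rw [evalWord_cons]
    cases c
    · exact IsUT_tmul hY ih
    · exact IsUT_tmul hX ih

/-- Restriction of a matrix along an embedding of indices. -/
def restr {m n : ℕ} (f : Fin m → Fin n) (X : Matrix (Fin n) (Fin n) Trop) :
    Matrix (Fin m) (Fin m) Trop := fun i j => X (f i) (f j)

theorem restr_tmul {m n : ℕ} (f : Fin m → Fin n)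
    (hc : ∀ i j k, f i ≤ k → k ≤ f j → ∃ l, f l = k)
    {X Y : Matrix (Fin n) (Fin n) Trop} (hX : IsUT X) (hY : IsUT Y) :
    restr f (tmul X Y) = tmul (restr f X) (restr f Y) := by
  funext i j
  apply le_antisymm
  · apply tmul_le
    intro k
    by_cases h1 : f i ≤ k
    · by_cases h2 : k ≤ f j
      · obtain ⟨l, rfl⟩ := hc i j k h1 h2
        exact le_tmul (restr f X) (restr f Y) i l j
      · simp [hY k (f j) (by simpa using h2)]
    · simp [hX (f i) k (by simpa using h1)]
  · apply tmul_le
    intro k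
    exact le_tmul X Y (f i) (f k) (f j)

theorem restr_evalWord {m n : ℕ} (f : Fin m → Fin n) (hf : Function.Injective f)
    (hc : ∀ i j k, f i ≤ k → k ≤ f j → ∃ l, f l = k)
    {X Y : Matrix (Fin n) (Fin n) Trop} (hX : IsUT X) (hY : IsUT Y) (w : List Bool) :
    restr f (evalWord w X Y) = evalWord w (restr f X) (restr f Y) := by
  induction w with
  | nil =>
    funext i j
    simp [restr, evalWord_nil, tId, hf.eq_iff]
  | cons c w ih =>
    rw [evalWord_cons, evalWord_cons, ← ih]
    cases c
    · exact restr_tmul f hc hY (IsUT_evalWord hX hY w)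
    · exact restr_tmul f hc hX (IsUT_evalWord hX hY w)

theorem conv_castSucc (n : ℕ) (i j : Fin n) (k : Fin (n + 1))
    (_ : i.castSucc ≤ k) (h2 : k ≤ j.castSucc) : ∃ l : Fin n, l.castSucc = k := by
  refine ⟨⟨k, ?_⟩, rfl⟩
  have h3 : (k : ℕ) ≤ j := h2
  omega

theorem conv_succ (n : ℕ) (i j : Fin n) (k : Fin (n + 1))
    (h1 : i.succ ≤ k) (_ : k ≤ j.succ) : ∃ l : Fin n, l.succ = k := by
  apply Fin.exists_succ_eq.2
  rintro rfl
  exact absurd h1 (by simp)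

/-- The identity `u = v` holds in `UT_n`. -/
def Holds (n : ℕ) (u v : List Bool) : Prop :=
  ∀ X Y : Matrix (Fin n) (Fin n) Trop, IsUT X → IsUT Y → evalWord u X Y = evalWord v X Y

/-- Two matrices in `UT_{n+1}` coming from an identity of `UT_n` differ only in the corner. -/
theorem agree {n : ℕ} {u v : List Bool} (h : Holds n u v)
    {X Y : Matrix (Fin (n + 1)) (Fin (n + 1)) Trop} (hX : IsUT X) (hY : IsUT Y)
    (i j : Fin (n + 1)) (hij : ¬ (i = 0 ∧ j = Fin.last n)) :
    evalWord u X Y i j = evalWord v X Y i j := by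
  by_cases hlt : (j : ℕ) < i
  · rw [IsUT_evalWord hX hY u i j hlt, IsUT_evalWord hX hY v i j hlt]
  by_cases hj : j = Fin.last n
  · have hi : i ≠ 0 := fun hi => hij ⟨hi, hj⟩
    have hj0 : j ≠ 0 := by
      rintro rfl
      apply hi
      ext
      simpa using hlt
    obtain ⟨i, rfl⟩ := Fin.exists_succ_eq.2 hi
    obtain ⟨j, rfl⟩ := Fin.exists_succ_eq.2 hj0
    have := h (restr Fin.succ X) (restr Fin.succ Y)
      (fun a b hab => hX _ _ (by simpa using hab)) (fun a b hab => hY _ _ (by simpa using hab))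
    rw [← restr_evalWord _ (Fin.succ_injective n) (conv_succ n) hX hY,
      ← restr_evalWord _ (Fin.succ_injective n) (conv_succ n) hX hY] at this
    exact congrFun (congrFun this i) j
  · have hi : i ≠ Fin.last n := by
      rintro rfl
      apply hj
      ext
      have := j.2
      simp at hlt ⊢
      omega
    obtain ⟨i, rfl⟩ := Fin.exists_castSucc_eq.2 hi
    obtain ⟨j, rfl⟩ := Fin.exists_castSucc_eq.2 hj
    have := h (restr Fin.castSucc X) (restr Fin.castSucc Y)
      (fun a b hab => hX _ _ (by simpa using hab)) (fun a b hab => hY _ _ (by simpa using hab))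
    rw [← restr_evalWord _ (Fin.castSucc_injective n) (conv_castSucc n) hX hY,
      ← restr_evalWord _ (Fin.castSucc_injective n) (conv_castSucc n) hX hY] at this
    exact congrFun (congrFun this i) j

theorem tmul_diag {n : ℕ} {X Y : Matrix (Fin n) (Fin n) Trop} (hX : IsUT X) (hY : IsUT Y)
    (i : Fin n) : tmul X Y i i = X i i + Y i i := by
  apply le_antisymm
  · apply tmul_le
    intro k
    rcases lt_trichotomy (k : ℕ) (i : ℕ) with h | h | h
    · simp [hX i k h]
    · rw [Fin.ext h]
    · simp [hY k i h]
  · exact le_tmul X Y i i i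

/-- One inequality of the inductive step: if for a corner path through `P` in the middle
there is a better value on the right, then the products compare. -/
theorem step_le {n : ℕ} {A B P Q : Matrix (Fin (n + 1)) (Fin (n + 1)) Trop}
    (hA : IsUT A) (hB : IsUT B)
    (hPQ : ∀ i j, ¬ (i = 0 ∧ j = Fin.last n) → P i j = Q i j)
    (hcorner : A 0 0 + (P 0 (Fin.last n) + B (Fin.last n) (Fin.last n)) ≤
      tmul A (tmul Q B) 0 (Fin.last n)) (i j : Fin (n + 1)) :
    tmul A (tmul P B) i j ≤ tmul A (tmul Q B) i j := by
  apply tmul_le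
  intro k
  obtain ⟨l, hl⟩ := tmul_attained P B k j
  rw [hl]
  by_cases hkl : k = 0 ∧ l = Fin.last n
  · obtain ⟨rfl, rfl⟩ := hkl
    by_cases hi : i = 0
    · by_cases hj : j = Fin.last n
      · subst hi hj
        exact hcorner
      · have : (j : ℕ) < Fin.last n := Fin.lt_last_iff_ne_last.2 hj
        simp [hB _ _ this]
    · have : ((0 : Fin (n + 1)) : ℕ) < i := Fin.pos_iff_ne_zero.2 hi
      simp [hA _ _ this]
  · rw [hPQ k l hkl]
    exact (add_le_add le_rfl (le_tmul Q B k l j)).trans (le_tmul A (tmul Q B) i k j)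

theorem step_eq {n : ℕ} (hn : 0 < n) {P Q : Matrix (Fin (n + 1)) (Fin (n + 1)) Trop}
    (hP : IsUT P) (hQ : IsUT Q)
    (hPQ : ∀ i j, ¬ (i = 0 ∧ j = Fin.last n) → P i j = Q i j) :
    tmul (tmul P Q) (tmul P (tmul P Q)) = tmul (tmul P Q) (tmul Q (tmul P Q)) := by
  have h0l : (0 : Fin (n + 1)) ≠ Fin.last n := by
    intro h
    have := congrArg Fin.val h
    simp at this
    omega
  have hR := IsUT_tmul hP hQ
  have d0 : P 0 0 = Q 0 0 := hPQ 0 0 (fun h => h0l h.2)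
  have dl : P (Fin.last n) (Fin.last n) = Q (Fin.last n) (Fin.last n) :=
    hPQ _ _ (fun h => h0l h.1.symm)
  funext i j
  apply le_antisymm
  · apply step_le hR hR hPQ
    rw [tmul_diag hP hQ, tmul_diag hP hQ, d0, dl]
    rcases le_total (Q 0 0) (Q (Fin.last n) (Fin.last n)) with h | h
    · -- use the first occurrence of P
      have h1 := le_tmul P Q 0 (Fin.last n) (Fin.last n)
      have h2 := le_tmul (tmul P Q) (tmul Q (tmul P Q)) 0 (Fin.last n) (Fin.last n)
      rw [tmul_diag hQ hR, tmul_diag hP hQ, dl] at h2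
      refine le_trans ?_ ((add_le_add h1 le_rfl).trans h2)
      generalize Q 0 0 = a at *
      generalize Q (Fin.last n) (Fin.last n) = b at *
      generalize P 0 (Fin.last n) = p at *
      calc a + a + (p + (b + b)) ≤ b + b + (p + (b + b)) := by gcongr
        _ = p + b + (b + (b + b)) := by abel
    · have h1 := le_tmul P Q 0 (Fin.last n) (Fin.last n)
      have h2 := le_tmul Q (tmul P Q) 0 0 (Fin.last n)
      have h3 := le_tmul (tmul P Q) (tmul Q (tmul P Q)) 0 0 (Fin.last n)
      rw [tmul_diag hP hQ, d0] at h3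
      refine le_trans ?_ ((add_le_add le_rfl ((add_le_add le_rfl h1).trans h2)).trans h3)
      generalize Q 0 0 = a at *
      generalize Q (Fin.last n) (Fin.last n) = b at *
      generalize P 0 (Fin.last n) = p at *
      calc a + a + (p + (b + b)) ≤ a + a + (p + (a + b)) := by gcongr
        _ = a + a + (a + (p + b)) := by abel
  · apply step_le hR hR (fun i j h => (hPQ i j h).symm)
    rw [tmul_diag hP hQ, tmul_diag hP hQ, d0, dl]
    rcases le_total (Q 0 0) (Q (Fin.last n) (Fin.last n)) with h | h
    · have h1 := le_tmul P Q 0 0 (Fin.last n)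
      have h2 := le_tmul (tmul P Q) (tmul P (tmul P Q)) 0 (Fin.last n) (Fin.last n)
      rw [tmul_diag hP hR, tmul_diag hP hQ, dl] at h2
      rw [d0] at h1
      refine le_trans ?_ ((add_le_add h1 le_rfl).trans h2)
      generalize Q 0 0 = a at *
      generalize Q (Fin.last n) (Fin.last n) = b at *
      generalize Q 0 (Fin.last n) = p at *
      calc a + a + (p + (b + b)) ≤ a + b + (p + (b + b)) := by gcongr
        _ = a + p + (b + (b + b)) := by abel
    · have h1 := le_tmul P Q 0 0 (Fin.last n)
      have h2 := le_tmul P (tmul P Q) 0 0 (Fin.last n)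
      have h3 := le_tmul (tmul P Q) (tmul P (tmul P Q)) 0 0 (Fin.last n)
      rw [tmul_diag hP hQ, d0] at h3
      rw [d0] at h1 h2
      refine le_trans ?_ ((add_le_add le_rfl ((add_le_add le_rfl h1).trans h2)).trans h3)
      generalize Q 0 0 = a at *
      generalize Q (Fin.last n) (Fin.last n) = b at *
      generalize Q 0 (Fin.last n) = p at *
      calc a + a + (p + (b + b)) ≤ a + a + (p + (a + a)) := by gcongr
        _ = a + a + (a + (a + p)) := by abel

/-- `UT_n` satisfies a nontrivial identity. -/
theorem exists_identity (n : ℕ) (hn : 0 < n) :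
    ∃ u v : List Bool, u ≠ v ∧ u.length = v.length ∧ Holds n u v := by
  induction n, hn using Nat.le_induction with
  | base =>
    refine ⟨[true, false], [false, true], by simp, rfl, ?_⟩
    intro X Y _ _
    funext i j
    have hi : i = 0 := Subsingleton.elim _ _
    have hj : j = 0 := Subsingleton.elim _ _
    subst hi hj
    simp [evalWord, tmul, tId, add_comm]
  | succ n hn ih =>
    obtain ⟨u, v, huv, hlen, h⟩ := ih
    refine ⟨(u ++ v) ++ (u ++ (u ++ v)), (u ++ v) ++ (v ++ (u ++ v)), ?_, by simp [hlen], ?_⟩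
    · intro he
      have h1 := List.append_cancel_left he
      exact huv (List.append_inj h1 hlen).1
    · intro X Y hX hY
      simp only [evalWord_append]
      exact step_eq hn (IsUT_evalWord hX hY u) (IsUT_evalWord hX hY v) (agree h hX hY)

/-- Add a new first row `(⊥, r)` and a new first column of `⊥`. -/
def extM {n : ℕ} (r : Fin n → Trop) (M : Matrix (Fin n) (Fin n) Trop) :
    Matrix (Fin (n + 1)) (Fin (n + 1)) Trop :=
  fun i j => Fin.cases (Fin.cases ⊥ r j) (fun i' => Fin.cases ⊥ (M i') j) i

theorem extM_IsUT {n : ℕ} (r : Fin n → Trop) {M : Matrix (Fin n) (Fin n) Trop} (hM : IsUT M) :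
    IsUT (extM r M) := by
  intro i j hij
  induction i using Fin.cases with
  | zero => simp at hij
  | succ i =>
    induction j using Fin.cases with
    | zero => rfl
    | succ j => exact hM i j (by simpa using hij)

theorem restr_extM {n : ℕ} (r : Fin n → Trop) (M : Matrix (Fin n) (Fin n) Trop) :
    restr Fin.succ (extM r M) = M := rfl

theorem evalWord_extM {n : ℕ} (r s : Fin n → Trop) {X Y : Matrix (Fin n) (Fin n) Trop}
    (hX : IsUT X) (hY : IsUT Y) (w : List Bool) (i j : Fin n) :
    evalWord w (extM r X) (extM s Y) i.succ j.succ = evalWord w X Y i j := by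
  have := restr_evalWord _ (Fin.succ_injective n) (conv_succ n)
    (extM_IsUT r hX) (extM_IsUT s hY) w
  exact congrFun (congrFun this i) j

theorem evalWord_cons_extM {n : ℕ} (c : Bool) (r s : Fin n → Trop)
    {X Y : Matrix (Fin n) (Fin n) Trop}
    (hX : IsUT X) (hY : IsUT Y) (w : List Bool) (j : Fin n) :
    evalWord (c :: w) (extM r X) (extM s Y) 0 j.succ =
      Finset.univ.sup fun k => (if c then r else s) k + evalWord w X Y k j := by
  rw [evalWord_cons]
  apply le_antisymm
  · apply tmul_le
    intro k
    induction k using Fin.cases with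
    | zero => cases c <;> simp [extM]
    | succ k =>
      rw [evalWord_extM r s hX hY]
      refine le_trans (le_of_eq ?_) (Finset.le_sup (Finset.mem_univ k))
      cases c <;> simp [extM]
  · apply Finset.sup_le
    intro k _
    refine le_trans (le_of_eq ?_) (le_tmul _ _ 0 k.succ _)
    rw [evalWord_extM r s hX hY]
    cases c <;> simp [extM]

/-- Descent: an identity of `UT_{n+1}` with equal first letters can be cancelled in `UT_n`. -/
theorem descent {n : ℕ} {c : Bool} {u v : List Bool} (h : Holds (n + 1) (c :: u) (c :: v)) :
    Holds n u v := by
  intro X Y hX hY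
  funext i j
  have h1 := h (extM (tId _ i) X) (extM (tId _ i) Y) (extM_IsUT _ hX) (extM_IsUT _ hY)
  have h2 := congrFun (congrFun h1 0) j.succ
  rw [evalWord_cons_extM c _ _ hX hY, evalWord_cons_extM c _ _ hX hY, ite_self] at h2
  change tmul (tId _) _ i j = tmul (tId _) _ i j at h2
  rwa [tId_tmul, tId_tmul] at h2

theorem first_letter {n : ℕ} (hn : 0 < n) {c d : Bool} {u v : List Bool}
    (h : Holds (n + 1) (c :: u) (d :: v)) : c = d := by
  by_contra hcd
  have i : Fin n := ⟨0, hn⟩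
  have h1 := h (extM (fun k => if c then tId _ i k else ⊥) (tId _))
    (extM (fun k => if c then ⊥ else tId _ i k) (tId _))
    (extM_IsUT _ (IsUT_tId n)) (extM_IsUT _ (IsUT_tId n))
  have h2 := congrFun (congrFun h1 0) i.succ
  rw [evalWord_cons_extM c _ _ (IsUT_tId n) (IsUT_tId n),
    evalWord_cons_extM d _ _ (IsUT_tId n) (IsUT_tId n), evalWord_tId, evalWord_tId] at h2
  have h3 : (Finset.univ.sup fun k => tId (Fin n) i k + tId (Fin n) k i) = (0 : Trop) := by
    change tmul (tId _) (tId _) i i = 0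
    rw [tId_tmul]
    simp [tId]
  cases c <;> cases d <;> simp_all

theorem nil_cons {n : ℕ} (hn : 0 < n) {d : Bool} {v : List Bool} : ¬ Holds n [] (d :: v) := by
  intro h
  have i : Fin n := ⟨0, hn⟩
  obtain ⟨B, hB⟩ : ∃ B : Matrix (Fin n) (Fin n) Trop, ∀ i j, B i j = ⊥ :=
    ⟨fun _ _ => ⊥, fun _ _ => rfl⟩
  have h1 := congrFun (congrFun (h B B (fun i j _ => hB i j) (fun i j _ => hB i j)) i) i
  rw [evalWord_cons, evalWord_nil, ite_self] at h1
  simp [tId, tmul, hB] at h1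

theorem stmt4 (n : ℕ) (hn : 0 < n) :
    ∃ u v : List Bool, u ≠ [] ∧ v ≠ [] ∧ u ≠ v ∧
      (∀ X Y : Matrix (Fin n) (Fin n) Trop, IsUT X → IsUT Y →
        evalWord u X Y = evalWord v X Y) ∧
      ∃ X Y : Matrix (Fin (n + 1)) (Fin (n + 1)) Trop, IsUT X ∧ IsUT Y ∧
        evalWord u X Y ≠ evalWord v X Y := by
  by_contra hcon
  have key : ∀ (u v : List Bool), u ≠ v → ¬ Holds n u v := by
    intro u
    induction u with
    | nil =>
      intro v huv h
      cases v with
      | nil => exact huv rfl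
      | cons d v => exact nil_cons hn h
    | cons c u ih =>
      intro v huv h
      cases v with
      | nil => exact nil_cons hn (fun X Y hX hY => (h X Y hX hY).symm)
      | cons d v =>
        have h' : Holds (n + 1) (c :: u) (d :: v) := by
          intro X Y hX hY
          by_contra hne
          exact hcon ⟨c :: u, d :: v, by simp, by simp, huv, h, X, Y, hX, hY, hne⟩
        have hcd := first_letter hn h'
        subst hcd
        exact ih v (fun e => huv (by rw [e])) (descent h')
  obtain ⟨u, v, huv, -, h⟩ := exists_identity n hn
  exact key u v huv h
end

section
/- Let n ≥ 3 be odd, let A ∈ M_n(T) be an invertible tropical matrix whose underlying permutation is an n-cycle σ (A_{ij} ≠ -∞ iff j = σ(i)), and let B ∈ M_n(T) be an invertible diagonal matrix (B_{ij} ≠ -∞ iff i = j). Then A²B² = B²A² if and only if B is a tropical scaling of the identity matrix, i.e., all diagonal entries of B are equal. -/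
theorem tmul_mono {ι : Type*} [Fintype ι] (X Y : Matrix ι ι Trop) (p : ι → ι)
    (h : ∀ i k, k ≠ p i → X i k = ⊥) (i j : ι) :
    tmul X Y i j = X i (p i) + Y (p i) j := by
  unfold tmul
  apply le_antisymm
  · apply Finset.sup_le
    intro k _
    by_cases hk : k = p i
    · rw [hk]
    · rw [h i k hk, WithBot.bot_add]
      exact bot_le
  · exact Finset.le_sup (f := fun k => X i k + Y k j) (Finset.mem_univ (p i))

/-- Let `n ≥ 3` be odd, `A` an invertible tropical matrix whose underlying
permutation is an `n`-cycle `σ`, and `B` an invertible diagonal tropical matrix.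
Then `A²B² = B²A²` iff `B` is a tropical scaling of the identity. -/
theorem stmt10 (n : ℕ) (hn : 3 ≤ n) (hodd : Odd n)
    (A B : Matrix (Fin n) (Fin n) Trop) (σ : Equiv.Perm (Fin n))
    (hcyc : σ.IsCycle) (hsupp : σ.support = Finset.univ)
    (hA : ∀ i j : Fin n, A i j ≠ ⊥ ↔ j = σ i)
    (hB : ∀ i j : Fin n, B i j ≠ ⊥ ↔ i = j) :
    tmul (tmul A A) (tmul B B) = tmul (tmul B B) (tmul A A) ↔
      ∃ c : ℝ, ∀ i : Fin n, B i i = (c : Trop) := by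
  have hA0 : ∀ i k, k ≠ σ i → A i k = ⊥ := fun i k hk => by
    by_contra h
    exact hk ((hA i k).1 h)
  have hB0 : ∀ i k, k ≠ id i → B i k = ⊥ := fun i k hk => by
    by_contra h
    exact hk ((hB i k).1 h).symm
  have hAA : ∀ i j, tmul A A i j = A i (σ i) + A (σ i) j := tmul_mono A A σ hA0
  have hBB : ∀ i j, tmul B B i j = B i i + B i j := tmul_mono B B id hB0
  have hAA0 : ∀ i k, k ≠ σ (σ i) → tmul A A i k = ⊥ := fun i k hk => by
    rw [hAA, hA0 _ _ hk, WithBot.add_bot]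
  have hBB0 : ∀ i k, k ≠ id i → tmul B B i k = ⊥ := fun i k hk => by
    rw [hBB, hB0 _ _ hk, WithBot.add_bot]
  have hL : ∀ i j, tmul (tmul A A) (tmul B B) i j
      = tmul A A i (σ (σ i)) + tmul B B (σ (σ i)) j :=
    tmul_mono _ _ (fun i => σ (σ i)) hAA0
  have hR : ∀ i j, tmul (tmul B B) (tmul A A) i j
      = tmul B B i i + tmul A A i j := tmul_mono _ _ id hBB0
  have hb : ∀ i, ∃ c : ℝ, B i i = (c : Trop) := fun i => by
    obtain ⟨c, hc⟩ := WithBot.ne_bot_iff_exists.1 ((hB i i).2 rfl)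
    exact ⟨c, hc.symm⟩
  have ha : ∀ i, ∃ c : ℝ, A i (σ i) = (c : Trop) := fun i => by
    obtain ⟨c, hc⟩ := WithBot.ne_bot_iff_exists.1 ((hA i (σ i)).2 rfl)
    exact ⟨c, hc.symm⟩
  choose b hb using hb
  choose a ha using ha
  constructor
  · intro h
    have h2 : ∀ i, b (σ (σ i)) = b i := fun i => by
      have h1 := congrFun (congrFun h i) (σ (σ i))
      rw [hL, hR, hAA, hBB, hBB, ha, ha, hb, hb] at h1
      have h3 : (a i + a (σ i)) + (b (σ (σ i)) + b (σ (σ i)))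
          = (b i + b i) + (a i + a (σ i)) := by exact_mod_cast h1
      linarith
    have h2k : ∀ (k : ℕ) i, b ((σ ^ (2 * k)) i) = b i := by
      intro k
      induction k with
      | zero => intro i; simp
      | succ k ih =>
        intro i
        have : (σ ^ (2 * (k + 1))) i = σ (σ ((σ ^ (2 * k)) i)) := by
          rw [show 2 * (k + 1) = 2 * k + 1 + 1 by ring, pow_succ', pow_succ']
          rfl
        rw [this, h2, ih]
    have hord : σ ^ n = 1 := by
      have := hcyc.orderOf
      rw [hsupp, Finset.card_univ, Fintype.card_fin] at this
      exact orderOf_dvd_iff_pow_eq_one.1 (dvd_of_eq this)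
    obtain ⟨m, hm⟩ := hodd
    have h1 : ∀ i, b (σ i) = b i := fun i => by
      have := h2k (m + 1) i
      rwa [show 2 * (m + 1) = n + 1 by omega, pow_succ, hord, one_mul] at this
    have hk : ∀ (k : ℕ) i, b ((σ ^ k) i) = b i := by
      intro k
      induction k with
      | zero => intro i; simp
      | succ k ih =>
        intro i
        rw [pow_succ', Equiv.Perm.mul_apply, h1, ih]
    have hne : ∀ i, σ i ≠ i := fun i => by
      rw [← Equiv.Perm.mem_support, hsupp]
      exact Finset.mem_univ i
    let z : Fin n := ⟨0, by omega⟩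
    refine ⟨b z, fun i => ?_⟩
    obtain ⟨k, hki⟩ := hcyc.exists_pow_eq (hne z) (hne i)
    rw [hb, ← hki, hk]
  · rintro ⟨c, hc⟩
    ext1 i j
    rw [hL, hR]
    by_cases hj : j = σ (σ i)
    · subst hj
      rw [hBB, hBB, hc, hc, add_comm]
    · rw [hAA0 i j hj, hBB0 _ j hj, WithBot.add_bot, WithBot.add_bot]
end

section
/- Let n ≥ 3 be odd, let A ∈ M_n(T) have underlying permutation an n-cycle and let B ∈ M_n(T) be an invertible diagonal matrix that is not a scaling of the identity. Then with u₂ = a²b⁴a² a²b² a²b⁴a² and v₂ = a²b⁴a² b²a² a²b⁴a², which form an identity satisfied by M_2(T), one has u₂(A,B) ≠ v₂(A,B). -/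
/-- The word `u₂ = a²b⁴a² a²b² a²b⁴a²` (with `a = true`, `b = false`). -/
def u2w : List Bool :=
  List.replicate 2 true ++ List.replicate 4 false ++ List.replicate 4 true ++
    List.replicate 2 false ++ List.replicate 2 true ++ List.replicate 4 false ++
    List.replicate 2 true

/-- The word `v₂ = a²b⁴a² b²a² a²b⁴a²`. -/
def v2w : List Bool :=
  List.replicate 2 true ++ List.replicate 4 false ++ List.replicate 2 true ++
    List.replicate 2 false ++ List.replicate 4 true ++ List.replicate 4 false ++
    List.replicate 2 true

abbrev RM := Fin 2 → Fin 2 → ℝ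

def rmul (P Q : RM) : RM := fun i j => max (P i 0 + Q 0 j) (P i 1 + Q 1 j)

theorem rmul_low (P Q : RM) (i k j : Fin 2) : P i k + Q k j ≤ rmul P Q i j := by
  fin_cases k <;> simp [rmul]

theorem rmul_up (P Q : RM) (i j : Fin 2) : ∃ k, rmul P Q i j = P i k + Q k j := by
  rcases max_choice (P i 0 + Q 0 j) (P i 1 + Q 1 j) with h | h
  · exact ⟨0, h⟩
  · exact ⟨1, h⟩

theorem rmul_le (P Q : RM) (i j : Fin 2) (c : ℝ) (h : ∀ k, P i k + Q k j ≤ c) :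
    rmul P Q i j ≤ c := max_le (h 0) (h 1)

theorem rmul_assoc (P Q R : RM) : rmul (rmul P Q) R = rmul P (rmul Q R) := by
  funext i j
  apply le_antisymm
  · refine rmul_le _ _ _ _ _ fun k => ?_
    obtain ⟨l, hl⟩ := rmul_up P Q i k
    linarith [rmul_low P (rmul Q R) i l j, rmul_low Q R l k j]
  · refine rmul_le _ _ _ _ _ fun k => ?_
    obtain ⟨l, hl⟩ := rmul_up Q R k j
    linarith [rmul_low (rmul P Q) R i l j, rmul_low P Q i k l]

def DP (P : RM) : Prop := P 0 1 + P 1 0 ≤ P 0 0 + P 1 1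

def rW (P Q : RM) : RM := rmul P (rmul Q (rmul Q P))

theorem rW_low (P Q : RM) (i j a b c : Fin 2) :
    P i a + Q a b + Q b c + P c j ≤ rW P Q i j := by
  have h1 := rmul_low P (rmul Q (rmul Q P)) i a j
  have h2 := rmul_low Q (rmul Q P) a b j
  have h3 := rmul_low Q P b c j
  unfold rW
  linarith

theorem rW_up (P Q : RM) (i j : Fin 2) :
    ∃ a b c, rW P Q i j = P i a + Q a b + Q b c + P c j := by
  obtain ⟨a, ha⟩ := rmul_up P (rmul Q (rmul Q P)) i j
  obtain ⟨b, hb⟩ := rmul_up Q (rmul Q P) a j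
  obtain ⟨c, hc⟩ := rmul_up Q P b j
  refine ⟨a, b, c, ?_⟩
  unfold rW
  linarith

/-- Any term of the right-hand product is a lower bound. -/
theorem tgt (P Q W : RM) (α β i k j : Fin 2) :
    W α i + Q i k + P k j + W j β ≤ rmul W (rmul (rmul Q P) W) α β := by
  have h1 := rmul_low W (rmul (rmul Q P) W) α i β
  have h2 := rmul_low (rmul Q P) W i j β
  have h3 := rmul_low Q P i k j
  linarith

set_option maxHeartbeats 4000000 in
theorem hardA (P Q : RM) (hp : DP P) (hq : DP Q) (α β k : Fin 2) :
    rW P Q α 0 + P 0 k + Q k 1 + rW P Q 1 β ≤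
      rmul (rW P Q) (rmul (rmul Q P) (rW P Q)) α β := by
  obtain ⟨a, b, c, h⟩ := rW_up P Q α 0
  obtain ⟨a', b', c', h'⟩ := rW_up P Q 1 β
  have t := tgt P Q (rW P Q) α β
  have l1 := rW_low P Q α 0
  have l2 := rW_low P Q α 1
  have l3 := rW_low P Q 0 β
  have l4 := rW_low P Q 1 β
  rw [h, h']
  clear h h'
  unfold DP at hp hq
  simp only [Fin.forall_fin_two, Fin.isValue] at t l1 l2 l3 l4
  generalize rmul (rW P Q) (rmul (rmul Q P) (rW P Q)) α β = V at *
  generalize rW P Q α 0 = wa at *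
  generalize rW P Q α 1 = wb at *
  generalize rW P Q 0 β = wc at *
  generalize rW P Q 1 β = wd at *
  obtain ⟨⟨⟨t1, t2⟩, ⟨t3, t4⟩⟩, ⟨⟨t5, t6⟩, ⟨t7, t8⟩⟩⟩ := t
  obtain ⟨⟨⟨m1, m2⟩, ⟨m3, m4⟩⟩, ⟨⟨m5, m6⟩, ⟨m7, m8⟩⟩⟩ := l1
  obtain ⟨⟨⟨n1, n2⟩, ⟨n3, n4⟩⟩, ⟨⟨n5, n6⟩, ⟨n7, n8⟩⟩⟩ := l2
  obtain ⟨⟨⟨o1, o2⟩, ⟨o3, o4⟩⟩, ⟨⟨o5, o6⟩, ⟨o7, o8⟩⟩⟩ := l3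
  obtain ⟨⟨⟨r1, r2⟩, ⟨r3, r4⟩⟩, ⟨⟨r5, r6⟩, ⟨r7, r8⟩⟩⟩ := l4
  revert a b c a' b' c'
  simp only [Fin.forall_fin_two, Fin.isValue]
  fin_cases k <;> fin_cases α <;> fin_cases β <;>
    simp only [Fin.zero_eta, Fin.mk_one, Fin.isValue] at *
  all_goals
    generalize P 0 0 = p11 at *
    generalize P 0 1 = p12 at *
    generalize P 1 0 = p21 at *
    generalize P 1 1 = p22 at *
    generalize Q 0 0 = q11 at *
    generalize Q 0 1 = q12 at *
    generalize Q 1 0 = q21 at *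
    generalize Q 1 1 = q22 at *
  all_goals (and_intros <;> linarith)

/-- Swapping the two indices. -/
def sw (P : RM) : RM := fun i j => P (1 - i) (1 - j)

theorem rmul_sw (P Q : RM) : rmul (sw P) (sw Q) = sw (rmul P Q) := by
  funext i j
  simp [rmul, sw, max_comm]

theorem hardB (P Q : RM) (hp : DP P) (hq : DP Q) (α β k : Fin 2) :
    rW P Q α 1 + P 1 k + Q k 0 + rW P Q 0 β ≤
      rmul (rW P Q) (rmul (rmul Q P) (rW P Q)) α β := by
  have h := hardA (sw P) (sw Q) (by simp only [DP, sw] at *; simp; linarith)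
    (by simp only [DP, sw] at *; simp; linarith) (1 - α) (1 - β) (1 - k)
  have hW : rW (sw P) (sw Q) = sw (rW P Q) := by simp only [rW, rmul_sw]
  rw [hW] at h
  simp only [rmul_sw] at h
  simpa [sw] using h

theorem rW_col (P Q : RM) (hp : DP P) (α : Fin 2) :
    rW P Q α 0 + P 0 1 ≤ rW P Q α 1 + P 0 0 ∧ rW P Q α 1 + P 1 0 ≤ rW P Q α 0 + P 1 1 := by
  unfold DP at hp
  constructor
  · obtain ⟨a, b, c, h⟩ := rW_up P Q α 0
    have l := rW_low P Q α 1 a b c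
    fin_cases c <;> simp at * <;> linarith
  · obtain ⟨a, b, c, h⟩ := rW_up P Q α 1
    have l := rW_low P Q α 0 a b c
    fin_cases c <;> simp at * <;> linarith

theorem core_le (P Q : RM) (hp : DP P) (hq : DP Q) (α β : Fin 2) :
    rmul (rW P Q) (rmul (rmul P Q) (rW P Q)) α β ≤
      rmul (rW P Q) (rmul (rmul Q P) (rW P Q)) α β := by
  refine rmul_le _ _ _ _ _ fun i => ?_
  obtain ⟨j, hj⟩ := rmul_up (rmul P Q) (rW P Q) i β
  obtain ⟨k, hk⟩ := rmul_up P Q i j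
  rw [hj, hk]
  have hA := hardA P Q hp hq α β k
  have hB := hardB P Q hp hq α β k
  have t := tgt P Q (rW P Q) α β
  obtain ⟨c1, c2⟩ := rW_col P Q hp α
  clear hj hk
  have t1 := t 0 0 0
  have t2 := t 1 0 0
  have t3 := t 1 1 1
  have t4 := t 0 1 1
  fin_cases i <;> fin_cases j <;> fin_cases k <;> simp at * <;> linarith

def tr (P : RM) : RM := fun i j => P j i

theorem rmul_tr (P Q : RM) : rmul (tr P) (tr Q) = tr (rmul Q P) := by
  funext i j
  simp [rmul, tr, add_comm]

theorem core_eq (P Q : RM) (hp : DP P) (hq : DP Q) :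
    rmul (rW P Q) (rmul (rmul P Q) (rW P Q)) = rmul (rW P Q) (rmul (rmul Q P) (rW P Q)) := by
  funext α β
  apply le_antisymm (core_le P Q hp hq α β)
  have h := core_le (tr P) (tr Q) (by simp only [DP, tr] at *; linarith)
    (by simp only [DP, tr] at *; linarith) β α
  have hW : rW (tr P) (tr Q) = tr (rW P Q) := by simp only [rW, rmul_tr, rmul_assoc]
  rw [hW] at h
  simp only [rmul_tr, tr, rmul_assoc] at h
  simpa only [rmul_assoc] using h

theorem DP_sq (X : RM) : DP (rmul X X) := by
  unfold DP
  obtain ⟨k, hk⟩ := rmul_up X X 0 1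
  obtain ⟨l, hl⟩ := rmul_up X X 1 0
  have h1 := rmul_low X X 0 0 0
  have h2 := rmul_low X X 0 1 0
  have h3 := rmul_low X X 1 0 1
  have h4 := rmul_low X X 1 1 1
  rw [hk, hl]
  clear hk hl
  fin_cases k <;> fin_cases l <;> simp at * <;> linarith

/-- right-nested real evaluation, word nonempty -/
theorem real_id (X Y : RM) :
    rmul X (rmul X (rmul Y (rmul Y (rmul Y (rmul Y (rmul X (rmul X (rmul X (rmul X
      (rmul Y (rmul Y (rmul X (rmul X (rmul Y (rmul Y (rmul Y (rmul Y (rmul X X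
      )))))))))))))))))) =
    rmul X (rmul X (rmul Y (rmul Y (rmul Y (rmul Y (rmul X (rmul X (rmul Y (rmul Y
      (rmul X (rmul X (rmul X (rmul X (rmul Y (rmul Y (rmul Y (rmul Y (rmul X X
      )))))))))))))))))) := by
  have h := core_eq _ _ (DP_sq X) (DP_sq Y)
  simpa only [rW, rmul_assoc] using h

/-- Embedding real matrices. -/
def cm (X : RM) : Matrix (Fin 2) (Fin 2) Trop := fun i j => ((X i j : ℝ) : Trop)

theorem tmul_cm (X Y : RM) : tmul (cm X) (cm Y) = cm (rmul X Y) := by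
  funext i j
  simp [tmul, cm, rmul, Fin.univ_succ]

theorem tmul_tId (X : Matrix (Fin 2) (Fin 2) Trop) : tmul X (tId (Fin 2)) = X := by
  funext i j
  fin_cases j <;> simp [tmul, tId, Fin.univ_succ]

theorem eval_cm (X Y : RM) : evalWord u2w (cm X) (cm Y) = evalWord v2w (cm X) (cm Y) := by
  simp only [evalWord, u2w, v2w, List.replicate, List.cons_append, List.nil_append, List.map_cons,
    List.map_nil, List.foldr_cons, List.foldr_nil, if_true, tmul_tId, tmul_cm, Bool.false_eq_true,
    if_false]
  rw [real_id]

/-- exponential map to the nonnegative reals -/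
noncomputable def ph (x : Trop) : ℝ := WithBot.recBotCoe 0 (fun r => Real.exp r) x

@[simp] theorem ph_bot : ph ⊥ = 0 := rfl
@[simp] theorem ph_coe (r : ℝ) : ph (r : Trop) = Real.exp r := rfl

theorem ph_nonneg (x : Trop) : 0 ≤ ph x := by
  induction x using WithBot.recBotCoe with
  | bot => simp
  | coe r => simpa using (Real.exp_pos r).le

theorem ph_inj : Function.Injective ph := by
  intro x y h
  induction x using WithBot.recBotCoe with
  | bot =>
    induction y using WithBot.recBotCoe with
    | bot => rfl
    | coe r => simp at h; exact absurd h.symm (Real.exp_pos r).ne'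
  | coe r =>
    induction y using WithBot.recBotCoe with
    | bot => simp at h
    | coe s => simpa using h

theorem ph_add (x y : Trop) : ph (x + y) = ph x * ph y := by
  induction x using WithBot.recBotCoe with
  | bot => simp
  | coe r =>
    induction y using WithBot.recBotCoe with
    | bot => simp
    | coe s => rw [← WithBot.coe_add, ph_coe, ph_coe, ph_coe, Real.exp_add]

theorem ph_mono : Monotone ph := by
  intro x y h
  induction x using WithBot.recBotCoe with
  | bot => simpa using ph_nonneg y
  | coe r =>
    induction y using WithBot.recBotCoe with
    | bot => simp at h
    | coe s => simpa using h

theorem ph_max (x y : Trop) : ph (max x y) = max (ph x) (ph y) := ph_mono.map_max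

theorem ph_tmul (X Y : Matrix (Fin 2) (Fin 2) Trop) (i j : Fin 2) :
    ph (tmul X Y i j) = max (ph (X i 0) * ph (Y 0 j)) (ph (X i 1) * ph (Y 1 j)) := by
  rw [← ph_add, ← ph_add, ← ph_max]
  simp [tmul, Fin.univ_succ]

open Filter Topology in
theorem tend_eval (X Y : Matrix (Fin 2) (Fin 2) Trop) (F G : ℝ → Matrix (Fin 2) (Fin 2) Trop)
    (hF : ∀ i j, Tendsto (fun N => ph (F N i j)) atBot (𝓝 (ph (X i j))))
    (hG : ∀ i j, Tendsto (fun N => ph (G N i j)) atBot (𝓝 (ph (Y i j))))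
    (w : List Bool) : ∀ i j,
    Tendsto (fun N => ph (evalWord w (F N) (G N) i j)) atBot (𝓝 (ph (evalWord w X Y i j))) := by
  induction w with
  | nil => intro i j; exact tendsto_const_nhds
  | cons c w ih =>
    intro i j
    cases c
    · change Tendsto (fun N => ph (tmul (G N) (evalWord w (F N) (G N)) i j)) atBot
        (𝓝 (ph (tmul Y (evalWord w X Y) i j)))
      simp only [ph_tmul]
      exact ((hG i 0).mul (ih 0 j)).max ((hG i 1).mul (ih 1 j))
    · change Tendsto (fun N => ph (tmul (F N) (evalWord w (F N) (G N)) i j)) atBot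
        (𝓝 (ph (tmul X (evalWord w X Y) i j)))
      simp only [ph_tmul]
      exact ((hF i 0).mul (ih 0 j)).max ((hF i 1).mul (ih 1 j))

open Filter Topology in
theorem tend_max (x : Trop) :
    Tendsto (fun N : ℝ => ph (max x (N : Trop))) atBot (𝓝 (ph x)) := by
  simp only [ph_max, ph_coe]
  have := (tendsto_const_nhds (x := ph x) (f := atBot)).max Real.tendsto_exp_atBot
  rwa [max_eq_left (ph_nonneg x)] at this

theorem max_real (x : Trop) (N : ℝ) : ∃ r : ℝ, max x (N : Trop) = (r : Trop) := by
  induction x using WithBot.recBotCoe with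
  | bot => exact ⟨N, by simp⟩
  | coe r => exact ⟨max r N, by simp⟩

theorem M2_id (X Y : Matrix (Fin 2) (Fin 2) Trop) : evalWord u2w X Y = evalWord v2w X Y := by
  funext i j
  apply ph_inj
  have h1 := tend_eval X Y (fun N i j => max (X i j) (N : Trop)) (fun N i j => max (Y i j) (N : Trop))
    (fun i j => tend_max _) (fun i j => tend_max _)
  refine tendsto_nhds_unique (h1 u2w i j) ?_
  convert h1 v2w i j using 4 with N
  have hh : ∀ Z : Matrix (Fin 2) (Fin 2) Trop, ∃ R : RM,
      (fun i j => max (Z i j) (N : Trop)) = cm R := by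
    intro Z
    choose R hR using fun i j => max_real (Z i j) N
    exact ⟨R, funext fun i => funext fun j => hR i j⟩
  obtain ⟨R, hR⟩ := hh X
  obtain ⟨S, hS⟩ := hh Y
  rw [hR, hS, eval_cm]

/-- Left multiplication by a monomial matrix. -/
theorem tmul_mono_s11 {n : ℕ} (A Y : Matrix (Fin n) (Fin n) Trop) (f : Fin n → Fin n) (a : Fin n → ℝ)
    (hA : ∀ i j, j ≠ f i → A i j = ⊥) (ha : ∀ i, A i (f i) = (a i : Trop)) (i j : Fin n) :
    tmul A Y i j = (a i : Trop) + Y (f i) j := by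
  unfold tmul
  apply le_antisymm
  · refine Finset.sup_le fun k _ => ?_
    by_cases h : k = f i
    · subst h; rw [ha]
    · rw [hA i k h]; simp
  · rw [← ha]
    exact Finset.le_sup (f := fun k => A i k + Y k j) (Finset.mem_univ (f i))

theorem neq_part (n : ℕ) (hn : 3 ≤ n) (hodd : Odd n)
    (A B : Matrix (Fin n) (Fin n) Trop) (σ : Equiv.Perm (Fin n))
    (hcyc : σ.IsCycle) (hsupp : σ.support = Finset.univ)
    (hA : ∀ i j : Fin n, A i j ≠ ⊥ ↔ j = σ i)
    (hB : ∀ i j : Fin n, B i j ≠ ⊥ ↔ i = j)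
    (hBne : ¬ ∃ c : ℝ, ∀ i : Fin n, B i i = (c : Trop)) :
    evalWord u2w A B ≠ evalWord v2w A B := by
  intro heq
  have ha0 : ∀ i, ∃ r : ℝ, A i (σ i) = (r : Trop) := fun i =>
    (WithBot.ne_bot_iff_exists.1 ((hA i (σ i)).2 rfl)).imp fun _ h => h.symm
  have hb0 : ∀ i, ∃ r : ℝ, B i i = (r : Trop) := fun i =>
    (WithBot.ne_bot_iff_exists.1 ((hB i i).2 rfl)).imp fun _ h => h.symm
  choose a ha using ha0
  choose b hb using hb0
  have mA := fun Y => tmul_mono_s11 A Y σ a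
    (fun i j h => by by_contra h'; exact h ((hA i j).1 h')) ha
  have mB := fun Y => tmul_mono_s11 B Y id b
    (fun i j h => by by_contra h'; exact h ((hB i j).1 h').symm) hb
  have hstep : ∀ i, b (σ (σ (σ (σ (σ (σ i)))))) = b (σ (σ (σ (σ i)))) := by
    intro i
    have h := congrFun (congrFun heq i) (σ (σ (σ (σ (σ (σ (σ (σ (σ (σ i))))))))))
    simp only [evalWord, u2w, v2w, List.replicate, List.cons_append, List.nil_append,
      List.map_cons, List.map_nil, List.foldr_cons, List.foldr_nil, ↓reduceIte, Bool.false_eq_true,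
      mA, mB, id, tId] at h
    simp only [← WithBot.coe_add, ← WithBot.coe_zero, WithBot.coe_inj] at h
    linarith
  have h2 : ∀ i, b ((σ ^ 2) i) = b i := by
    intro i
    have := hstep (σ.symm (σ.symm (σ.symm (σ.symm i))))
    simpa [pow_two] using this
  have h2k : ∀ k i, b (((σ ^ 2) ^ k) i) = b i := by
    intro k
    induction k with
    | zero => intro i; simp
    | succ k ih => intro i; rw [pow_succ, Equiv.Perm.mul_apply, ih, h2]
  have hord : σ ^ n = 1 := by
    have := hcyc.orderOf
    rw [hsupp, Finset.card_univ, Fintype.card_fin] at this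
    exact orderOf_dvd_iff_pow_eq_one.1 (dvd_of_eq this)
  have h1 : ∀ i, b (σ i) = b i := by
    intro i
    obtain ⟨m, hm⟩ := hodd
    have := h2k (m + 1) i
    rwa [← pow_mul, show 2 * (m + 1) = n + 1 by omega, pow_succ, hord, one_mul] at this
  have h1k : ∀ (k : ℕ) i, b ((σ ^ k) i) = b i := by
    intro k
    induction k with
    | zero => intro i; simp
    | succ k ih => intro i; rw [pow_succ, Equiv.Perm.mul_apply, ih, h1]
  let z : Fin n := ⟨0, by omega⟩
  refine hBne ⟨b z, fun i => ?_⟩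
  have hne : ∀ x, σ x ≠ x := fun x => by
    rw [← Equiv.Perm.mem_support, hsupp]; exact Finset.mem_univ x
  obtain ⟨k, hk⟩ := (hcyc.sameCycle (hne z) (hne i)).exists_nat_pow_eq
  rw [hb, ← hk, h1k]

/-- For odd `n ≥ 3`, `A` with underlying permutation an `n`-cycle and `B` an
invertible diagonal matrix that is not a scaling of the identity, the identity
`u₂ = v₂` is satisfied by `M_2(𝕋)` but `u₂(A,B) ≠ v₂(A,B)`. -/
theorem stmt11 (n : ℕ) (hn : 3 ≤ n) (hodd : Odd n)
    (A B : Matrix (Fin n) (Fin n) Trop) (σ : Equiv.Perm (Fin n))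
    (hcyc : σ.IsCycle) (hsupp : σ.support = Finset.univ)
    (hA : ∀ i j : Fin n, A i j ≠ ⊥ ↔ j = σ i)
    (hB : ∀ i j : Fin n, B i j ≠ ⊥ ↔ i = j)
    (hBne : ¬ ∃ c : ℝ, ∀ i : Fin n, B i i = (c : Trop)) :
    (∀ X Y : Matrix (Fin 2) (Fin 2) Trop, evalWord u2w X Y = evalWord v2w X Y) ∧
    evalWord u2w A B ≠ evalWord v2w A B := by
  exact ⟨M2_id, neq_part n hn hodd A B σ hcyc hsupp hA hB hBne⟩
end

section
/- Let u, v be words over {a,b} such that u[ab,ba] = v[ab,ba] is a semigroup identity satisfied by UT₄(T). Then the identity abuab[ab,ba] = abvab[ab,ba] is satisfied by the plactic monoid P₄ of rank 4. -/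
/-- The Knuth relations on the free monoid over `{1, 2, 3, 4}` (encoded as `Fin 4`):
`bca = bac` for `a < b ≤ c` and `cab = acb` for `a ≤ b < c`. -/
def KnuthRel : FreeMonoid (Fin 4) → FreeMonoid (Fin 4) → Prop := fun x y =>
  (∃ a b c : Fin 4, a < b ∧ b ≤ c ∧
    x = FreeMonoid.of b * FreeMonoid.of c * FreeMonoid.of a ∧
    y = FreeMonoid.of b * FreeMonoid.of a * FreeMonoid.of c) ∨
  (∃ a b c : Fin 4, a ≤ b ∧ b < c ∧
    x = FreeMonoid.of c * FreeMonoid.of a * FreeMonoid.of b ∧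
    y = FreeMonoid.of a * FreeMonoid.of c * FreeMonoid.of b)

/-- The plactic monoid of rank 4. -/
abbrev P4 := (conGen KnuthRel).Quotient

/-- Evaluation of a word over `{a, b}` (`a = true`, `b = false`) in a monoid,
substituting `a ↦ x`, `b ↦ y`. -/
def evalM {M : Type*} [Monoid M] (w : List Bool) (x y : M) : M :=
  (w.map fun c => if c then x else y).prod


/-! ### Tropical matrices as a monoid -/

/-- Type synonym for square tropical matrices, carrying the tropical product. -/
def TMat (ι : Type) : Type := Matrix ι ι Trop

theorem tmul_term_le {ι : Type} [Fintype ι] (A B : Matrix ι ι Trop) (i k j : ι) :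
    A i k + B k j ≤ tmul A B i j :=
  Finset.le_sup (f := fun k => A i k + B k j) (Finset.mem_univ k)

theorem tmul_le_of {ι : Type} [Fintype ι] (A B : Matrix ι ι Trop) (i j : ι) (r : Trop)
    (h : ∀ k, A i k + B k j ≤ r) : tmul A B i j ≤ r :=
  Finset.sup_le fun k _ => h k

theorem trop_add_sup {ι : Type} (s : Finset ι) (f : ι → Trop) (c : Trop) :
    c + s.sup f = s.sup fun k => c + f k := by
  classical
  induction s using Finset.induction_on with
  | empty => simp
  | insert a s _ ih => rw [Finset.sup_insert, Finset.sup_insert, ← ih]; exact add_max _ _ _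

theorem trop_sup_add {ι : Type} (s : Finset ι) (f : ι → Trop) (c : Trop) :
    s.sup f + c = s.sup fun k => f k + c := by
  rw [add_comm, trop_add_sup]
  simp only [add_comm]

instance {ι : Type} [Fintype ι] [DecidableEq ι] : Monoid (TMat ι) where
  mul A B := tmul A B
  one := tId ι
  mul_assoc A B C := by
    change tmul (tmul A B) C = tmul A (tmul B C)
    funext i j
    unfold tmul
    simp only [trop_sup_add, trop_add_sup]
    rw [Finset.sup_comm]
    simp only [add_assoc]
  one_mul A := by
    change tmul (tId ι) A = A
    funext i j
    apply le_antisymm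
    · apply tmul_le_of
      intro k
      by_cases h : i = k
      · subst h; simp [tId]
      · simp [tId, h]
    · have := tmul_term_le (tId ι) A i i j
      simpa [tId] using this
  mul_one A := by
    change tmul A (tId ι) = A
    funext i j
    apply le_antisymm
    · apply tmul_le_of
      intro k
      by_cases h : k = j
      · subst h; simp [tId]
      · simp [tId, h]
    · have := tmul_term_le A (tId ι) i j j
      simpa [tId] using this

theorem TMat.term_le {ι : Type} [Fintype ι] [DecidableEq ι] (A B : TMat ι) (i k j : ι) :
    A i k + B k j ≤ (A * B) i j := tmul_term_le A B i k j

theorem TMat.le_of {ι : Type} [Fintype ι] [DecidableEq ι] (A B : TMat ι) (i j : ι) (r : Trop)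
    (h : ∀ k, A i k + B k j ≤ r) : (A * B) i j ≤ r := tmul_le_of A B i j r h

theorem TMat.one_self {ι : Type} [Fintype ι] [DecidableEq ι] (i : ι) :
    (1 : TMat ι) i i = 0 := by
  change tId ι i i = 0
  simp [tId]

theorem TMat.one_ne {ι : Type} [Fintype ι] [DecidableEq ι] {i j : ι} (h : i ≠ j) :
    (1 : TMat ι) i j = ⊥ := by
  change tId ι i j = ⊥
  simp [tId, h]

theorem evalWord_eq {ι : Type} [Fintype ι] [DecidableEq ι] (w : List Bool) (X Y : TMat ι) :
    evalWord w X Y = evalM (M := TMat ι) w X Y := by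
  unfold evalM evalWord
  rw [List.prod_eq_foldr]
  rfl

/-! ### Evaluation of words -/

theorem evalM_nil {M : Type*} [Monoid M] (x y : M) : evalM [] x y = 1 := rfl

theorem evalM_cons {M : Type*} [Monoid M] (c : Bool) (w : List Bool) (x y : M) :
    evalM (c :: w) x y = (if c then x else y) * evalM w x y := by simp [evalM]

theorem evalM_append {M : Type*} [Monoid M] (w w' : List Bool) (x y : M) :
    evalM (w ++ w') x y = evalM w x y * evalM w' x y := by simp [evalM]

theorem evalM_subst {M : Type*} [Monoid M] (w : List Bool) (x y : M) :
    evalM (subst w [true, false] [false, true]) x y = evalM w (x * y) (y * x) := by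
  induction w with
  | nil => rfl
  | cons c w ih =>
    have : subst (c :: w) [true, false] [false, true] =
      (if c then [true, false] else [false, true]) ++ subst w [true, false] [false, true] := rfl
    rw [this, evalM_append, ih, evalM_cons]
    cases c <;> simp [evalM]

theorem evalM_map {M N : Type*} [Monoid M] [Monoid N] (f : M →* N) (w : List Bool) (x y : M) :
    f (evalM w x y) = evalM w (f x) (f y) := by
  induction w with
  | nil => simp [evalM]
  | cons c w ih => rw [evalM_cons, evalM_cons, map_mul, ih]; cases c <;> simp

/-- The two words in the conclusion, evaluated. -/
theorem evalM_long {M : Type*} [Monoid M] (u : List Bool) (x y : M) :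
    evalM (subst ([true, false] ++ u ++ [true, false]) [true, false] [false, true]) x y =
      ((x * y) * (y * x)) * evalM u (x * y) (y * x) * ((x * y) * (y * x)) := by
  rw [evalM_subst, evalM_append, evalM_append]
  simp [evalM]

/-! ### Upper triangular matrices -/

theorem IsUT.mul {n : ℕ} {A B : TMat (Fin n)} (hA : IsUT A) (hB : IsUT B) :
    IsUT (A * B : TMat (Fin n)) := by
  intro i j hij
  apply le_bot_iff.1
  apply TMat.le_of
  intro k
  by_cases h : (k : ℕ) < i
  · rw [hA i k h]; simp
  · rw [hB k j (by omega)]; simp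

theorem IsUT.one {n : ℕ} : IsUT (1 : TMat (Fin n)) := by
  intro i j hij
  apply TMat.one_ne
  rintro rfl
  omega

theorem IsUT.evalM {n : ℕ} {A B : TMat (Fin n)} (hA : IsUT A) (hB : IsUT B) (w : List Bool) :
    IsUT (evalM w A B : TMat (Fin n)) := by
  induction w with
  | nil => exact IsUT.one
  | cons c w ih => rw [evalM_cons]; cases c; exacts [hB.mul ih, hA.mul ih]

theorem IsUT.diag_mul {n : ℕ} {A B : TMat (Fin n)} (hA : IsUT A) (hB : IsUT B) (i : Fin n) :
    (A * B) i i = A i i + B i i := by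
  apply le_antisymm
  · apply TMat.le_of
    intro k
    rcases lt_trichotomy k i with h | h | h
    · rw [hA i k h]; simp
    · rw [h]
    · rw [hB k i h]; simp
  · exact TMat.term_le A B i i i

/-- Delete node `m`. -/
def del (m : Fin 5) (A : TMat (Fin 5)) : TMat (Fin 4) := fun i j => A (m.succAbove i) (m.succAbove j)

theorem del_UT (m : Fin 5) {A : TMat (Fin 5)} (hA : IsUT A) : IsUT (del m A) := by
  intro i j hij
  apply hA
  exact Fin.strictMono_succAbove m hij

theorem del_le (m : Fin 5) (A B : TMat (Fin 5)) (w : List Bool) (i j : Fin 4) :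
    evalM w (del m A) (del m B) i j ≤ evalM w A B (m.succAbove i) (m.succAbove j) := by
  induction w generalizing i with
  | nil =>
    rw [evalM_nil, evalM_nil]
    by_cases h : i = j
    · subst h; rw [TMat.one_self, TMat.one_self]
    · rw [TMat.one_ne h]; exact bot_le
  | cons c w ih =>
    rw [evalM_cons, evalM_cons]
    apply TMat.le_of
    intro k
    refine le_trans ?_ (TMat.term_le _ _ _ (m.succAbove k) _)
    cases c <;> exact add_le_add le_rfl (ih k)

theorem le_del_left (m : Fin 5) {A B : TMat (Fin 5)} (hA : IsUT A) (hB : IsUT B) (w : List Bool)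
    (i j : Fin 4) (hi : m < m.succAbove i) :
    evalM w A B (m.succAbove i) (m.succAbove j) ≤ evalM w (del m A) (del m B) i j := by
  induction w generalizing i with
  | nil =>
    rw [evalM_nil, evalM_nil]
    by_cases h : i = j
    · subst h; rw [TMat.one_self, TMat.one_self]
    · rw [TMat.one_ne (fun h' => h (Fin.succAbove_right_injective h'))]; exact bot_le
  | cons c w ih =>
    rw [evalM_cons, evalM_cons]
    apply TMat.le_of
    intro k
    have hC : IsUT (if c then A else B : TMat (Fin 5)) := by cases c; exacts [hB, hA]
    by_cases hk : m < k
    · obtain ⟨k', rfl⟩ := Fin.exists_succAbove_eq hk.ne'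
      refine le_trans ?_ (TMat.term_le _ _ _ k' _)
      cases c <;> exact add_le_add le_rfl (ih k' hk)
    · rw [hC _ k (show k < m.succAbove i by order)]; simp

theorem le_del_right (m : Fin 5) {A B : TMat (Fin 5)} (hA : IsUT A) (hB : IsUT B) (w : List Bool)
    (i j : Fin 4) (hj : m.succAbove j < m) :
    evalM w A B (m.succAbove i) (m.succAbove j) ≤ evalM w (del m A) (del m B) i j := by
  induction w using List.reverseRecOn generalizing j with
  | nil =>
    rw [evalM_nil, evalM_nil]
    by_cases h : i = j
    · subst h; rw [TMat.one_self, TMat.one_self]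
    · rw [TMat.one_ne (fun h' => h (Fin.succAbove_right_injective h'))]; exact bot_le
  | append_singleton w c ih =>
    rw [evalM_append, evalM_append, evalM_cons, evalM_nil, mul_one, evalM_cons, evalM_nil, mul_one]
    apply TMat.le_of
    intro k
    have hC : IsUT (if c then A else B : TMat (Fin 5)) := by cases c; exacts [hB, hA]
    by_cases hk : k < m
    · obtain ⟨k', rfl⟩ := Fin.exists_succAbove_eq hk.ne
      refine le_trans ?_ (TMat.term_le _ _ _ k' _)
      cases c <;> exact add_le_add (ih k' hk) le_rfl
    · rw [hC k _ (show m.succAbove j < k by order)]; simp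

/-! ### The key lemma on 5-by-5 upper triangular matrices -/

theorem add_mul_le {n : ℕ} (A B : TMat (Fin n)) (i j : Fin n) (c r : Trop)
    (h : ∀ k, c + (A i k + B k j) ≤ r) : c + (A * B) i j ≤ r := by
  change c + Finset.univ.sup (fun k => A i k + B k j) ≤ r
  rw [trop_add_sup]
  exact Finset.sup_le fun k _ => h k

theorem TMat.term3_le {n : ℕ} (A B C : TMat (Fin n)) (i k l j : Fin n) :
    A i k + (B k l + C l j) ≤ (A * (B * C)) i j :=
  le_trans (add_le_add le_rfl (TMat.term_le B C k l j)) (TMat.term_le A _ i k j)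

theorem add_mul3_le {n : ℕ} (A B C : TMat (Fin n)) (i j : Fin n) (c r : Trop)
    (h : ∀ k l, c + (A i k + (B k l + C l j)) ≤ r) : c + (A * (B * C)) i j ≤ r := by
  apply add_mul_le
  intro k
  rw [← add_assoc]
  apply add_mul_le
  intro l
  rw [add_assoc]
  exact h k l

theorem step_left {P Q V : TMat (Fin 5)} {W : TMat (Fin 4)} (hQ : IsUT Q)
    (c0 c1 pre : Trop) (hc0 : P 0 0 + Q 0 0 = c0) (hc1 : P 1 1 + Q 1 1 = c1) (hc : c0 ≤ c1)
    (h1 : c0 + c0 + (P 0 0 + Q 0 1) ≤ pre + c1) (h2 : c0 + c0 + P 0 1 ≤ pre + P 1 1)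
    (hV : ∀ j, c0 + c0 + V 0 ((1 : Fin 5).succAbove j) ≤
      max (c0 + c0 + W 0 j) (pre + V 1 ((1 : Fin 5).succAbove j)))
    (hW : ∀ i j, (1 : Fin 5) < (1 : Fin 5).succAbove i →
      V ((1 : Fin 5).succAbove i) ((1 : Fin 5).succAbove j) ≤ W i j) (j : Fin 4) :
    c0 + c0 + (P * (Q * V)) 0 ((1 : Fin 5).succAbove j) ≤
      max (c0 + c0 + (del 1 P * (del 1 Q * W)) 0 j)
        (pre + (P * (Q * V)) 1 ((1 : Fin 5).succAbove j)) := by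
  set j' := (1 : Fin 5).succAbove j with hj'
  apply add_mul3_le
  intro m k
  have hat : ∀ m' k' : Fin 4, (1 : Fin 5) < (1 : Fin 5).succAbove k' →
      c0 + c0 + (P 0 ((1 : Fin 5).succAbove m') + (Q ((1 : Fin 5).succAbove m')
        ((1 : Fin 5).succAbove k') + V ((1 : Fin 5).succAbove k') j')) ≤
      c0 + c0 + (del 1 P * (del 1 Q * W)) 0 j := by
    intro m' k' hk
    refine add_le_add le_rfl (le_trans ?_ (TMat.term3_le _ _ _ 0 m' k' j))
    exact add_le_add le_rfl (add_le_add le_rfl (hW k' j hk))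
  by_cases hm1 : m = 1
  · subst hm1
    refine le_max_of_le_right ?_
    calc c0 + c0 + (P 0 1 + (Q 1 k + V k j')) = c0 + c0 + P 0 1 + (Q 1 k + V k j') := by abel
      _ ≤ pre + P 1 1 + (Q 1 k + V k j') := add_le_add h2 le_rfl
      _ = pre + (P 1 1 + (Q 1 k + V k j')) := by abel
      _ ≤ _ := add_le_add le_rfl (TMat.term3_le _ _ _ _ _ _ _)
  obtain ⟨m', rfl⟩ := Fin.exists_succAbove_eq hm1
  by_cases hk1 : 1 < k
  · obtain ⟨k', rfl⟩ := Fin.exists_succAbove_eq hk1.ne'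
    exact le_max_of_le_left (hat m' k' hk1)
  by_cases hm0 : m' = 0
  · subst hm0
    have e0 : (1 : Fin 5).succAbove 0 = 0 := rfl
    rw [e0]
    have hk : k = 0 ∨ k = 1 := by omega
    rcases hk with rfl | rfl
    · have := add_le_add (le_refl c0) (hV j)
      rw [← max_add_add_left] at this
      rw [← hj'] at this
      calc c0 + c0 + (P 0 0 + (Q 0 0 + V 0 j')) = c0 + (c0 + c0 + V 0 j') := by
            rw [← add_assoc (P 0 0), hc0]; abel
        _ ≤ _ := this
        _ ≤ _ := by
          apply max_le_max
          · calc c0 + (c0 + c0 + W 0 j) = c0 + c0 + (P 0 0 + (Q 0 0 + W 0 j)) := by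
                  rw [← add_assoc (P 0 0), hc0]; abel
              _ ≤ _ := add_le_add le_rfl (TMat.term3_le (del 1 P) (del 1 Q) W 0 0 0 j)
          · calc c0 + (pre + V 1 j') ≤ c1 + (pre + V 1 j') := add_le_add hc le_rfl
              _ = pre + (P 1 1 + (Q 1 1 + V 1 j')) := by
                  rw [← add_assoc (P 1 1), hc1]; abel
              _ ≤ _ := add_le_add le_rfl (TMat.term3_le _ _ _ _ _ _ _)
    · refine le_max_of_le_right ?_
      calc c0 + c0 + (P 0 0 + (Q 0 1 + V 1 j')) = c0 + c0 + (P 0 0 + Q 0 1) + V 1 j' := by abel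
        _ ≤ pre + c1 + V 1 j' := add_le_add h1 le_rfl
        _ = pre + (P 1 1 + (Q 1 1 + V 1 j')) := by rw [← hc1]; abel
        _ ≤ _ := add_le_add le_rfl (TMat.term3_le _ _ _ _ _ _ _)
  · have hlt : k < (1 : Fin 5).succAbove m' := by
      have : (1 : Fin 5) < (1 : Fin 5).succAbove m' := by
        revert hm0; revert m'; decide
      order
    rw [hQ _ k hlt]; simp

theorem step_right {P Q V : TMat (Fin 5)} {W : TMat (Fin 4)} (hP : IsUT P)
    (c0 c1 pre : Trop) (hc0 : P 4 4 + Q 4 4 = c0) (hc1 : P 3 3 + Q 3 3 = c1) (hc : c0 ≤ c1)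
    (h1 : c0 + c0 + (P 3 4 + Q 4 4) ≤ pre + c1) (h2 : c0 + c0 + Q 3 4 ≤ pre + Q 3 3)
    (hV : ∀ i, c0 + c0 + V ((3 : Fin 5).succAbove i) 4 ≤
      max (c0 + c0 + W i 3) (pre + V ((3 : Fin 5).succAbove i) 3))
    (hW : ∀ i j, (3 : Fin 5).succAbove j < (3 : Fin 5) →
      V ((3 : Fin 5).succAbove i) ((3 : Fin 5).succAbove j) ≤ W i j) (i : Fin 4) :
    c0 + c0 + (V * (P * Q)) ((3 : Fin 5).succAbove i) 4 ≤
      max (c0 + c0 + (W * (del 3 P * del 3 Q)) i 3)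
        (pre + (V * (P * Q)) ((3 : Fin 5).succAbove i) 3) := by
  set i' := (3 : Fin 5).succAbove i with hi'
  apply add_mul3_le
  intro k m
  have hat : ∀ k' m' : Fin 4, (3 : Fin 5).succAbove k' < (3 : Fin 5) →
      c0 + c0 + (V i' ((3 : Fin 5).succAbove k') + (P ((3 : Fin 5).succAbove k')
        ((3 : Fin 5).succAbove m') + Q ((3 : Fin 5).succAbove m') 4)) ≤
      c0 + c0 + (W * (del 3 P * del 3 Q)) i 3 := by
    intro k' m' hk
    refine add_le_add le_rfl (le_trans ?_ (TMat.term3_le _ _ _ i k' m' 3))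
    exact add_le_add (hW i k' hk) le_rfl
  by_cases hm1 : m = 3
  · subst hm1
    refine le_max_of_le_right ?_
    calc c0 + c0 + (V i' k + (P k 3 + Q 3 4)) = c0 + c0 + Q 3 4 + (V i' k + P k 3) := by abel
      _ ≤ pre + Q 3 3 + (V i' k + P k 3) := add_le_add h2 le_rfl
      _ = pre + (V i' k + (P k 3 + Q 3 3)) := by abel
      _ ≤ _ := add_le_add le_rfl (TMat.term3_le _ _ _ _ _ _ _)
  obtain ⟨m', rfl⟩ := Fin.exists_succAbove_eq hm1
  by_cases hk1 : k < 3
  · obtain ⟨k', rfl⟩ := Fin.exists_succAbove_eq hk1.ne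
    exact le_max_of_le_left (hat k' m' hk1)
  by_cases hm0 : m' = 3
  · subst hm0
    have e0 : (3 : Fin 5).succAbove 3 = 4 := rfl
    rw [e0]
    have hk : k = 4 ∨ k = 3 := by omega
    rcases hk with rfl | rfl
    · have := add_le_add (le_refl c0) (hV i)
      rw [← max_add_add_left] at this
      rw [← hi'] at this
      calc c0 + c0 + (V i' 4 + (P 4 4 + Q 4 4)) = c0 + (c0 + c0 + V i' 4) := by
            rw [hc0]; abel
        _ ≤ _ := this
        _ ≤ _ := by
          apply max_le_max
          · calc c0 + (c0 + c0 + W i 3) = c0 + c0 + (W i 3 + (P 4 4 + Q 4 4)) := by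
                  rw [hc0]; abel
              _ ≤ _ := add_le_add le_rfl (TMat.term3_le W (del 3 P) (del 3 Q) i 3 3 3)
          · calc c0 + (pre + V i' 3) ≤ c1 + (pre + V i' 3) := add_le_add hc le_rfl
              _ = pre + (V i' 3 + (P 3 3 + Q 3 3)) := by
                  rw [hc1]; abel
              _ ≤ _ := add_le_add le_rfl (TMat.term3_le _ _ _ _ _ _ _)
    · refine le_max_of_le_right ?_
      calc c0 + c0 + (V i' 3 + (P 3 4 + Q 4 4)) = c0 + c0 + (P 3 4 + Q 4 4) + V i' 3 := by abel
        _ ≤ pre + c1 + V i' 3 := add_le_add h1 le_rfl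
        _ = pre + (V i' 3 + (P 3 3 + Q 3 3)) := by rw [← hc1]; abel
        _ ≤ _ := add_le_add le_rfl (TMat.term3_le _ _ _ _ _ _ _)
  · have hlt : (3 : Fin 5).succAbove m' < k := by
      have : (3 : Fin 5).succAbove m' < (3 : Fin 5) := by
        revert hm0; revert m'; decide
      order
    rw [hP k _ hlt]; simp

theorem term4_le (A B C D : TMat (Fin 5)) (i k l m j : Fin 5) :
    A i k + B k l + (C l m + D m j) ≤ ((A * B) * (C * D)) i j :=
  le_trans (add_le_add (TMat.term_le A B i k l) (TMat.term_le C D l m j)) (TMat.term_le _ _ i l j)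

theorem claim_left {X Y : TMat (Fin 5)} (hX : IsUT X) (hY : IsUT Y)
    (hc : X 0 0 + Y 0 0 ≤ X 1 1 + Y 1 1) (u : List Bool) (j : Fin 4) :
    (X 0 0 + Y 0 0) + (X 0 0 + Y 0 0) + evalM u (X * Y) (Y * X) 0 ((1 : Fin 5).succAbove j) ≤
      max ((X 0 0 + Y 0 0) + (X 0 0 + Y 0 0) +
          evalM u (del 1 X * del 1 Y) (del 1 Y * del 1 X) 0 j)
        (((X * Y) * (Y * X)) 0 1 + evalM u (X * Y) (Y * X) 1 ((1 : Fin 5).succAbove j)) := by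
  induction u generalizing j with
  | nil =>
    refine le_max_of_le_left (add_le_add le_rfl ?_)
    rw [evalM_nil, evalM_nil]
    by_cases h : 0 = j
    · subst h; rw [TMat.one_self]; exact (TMat.one_self (0 : Fin 5)).le
    · rw [TMat.one_ne]
      · exact bot_le
      · revert h; revert j; decide
  | cons c u ih =>
    have hW : ∀ i j, (1 : Fin 5) < (1 : Fin 5).succAbove i →
        evalM u (X * Y) (Y * X) ((1 : Fin 5).succAbove i) ((1 : Fin 5).succAbove j) ≤
        evalM u (del 1 X * del 1 Y) (del 1 Y * del 1 X) i j := by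
      intro i j hi
      rw [← evalM_subst, ← evalM_subst]
      exact le_del_left 1 hX hY _ i j hi
    rw [evalM_cons, evalM_cons]
    cases c
    · simp only [Bool.false_eq_true, if_false, mul_assoc (Y) X, mul_assoc (del 1 Y)]
      refine step_left hX _ (X 1 1 + Y 1 1) _ (add_comm _ _) (add_comm _ _) hc ?_ ?_ ih hW j
      · refine le_trans ?_ (add_le_add (term4_le X Y Y X 0 0 0 0 1) le_rfl)
        calc _ ≤ X 0 0 + Y 0 0 + (Y 0 0 + X 0 1) + (X 0 0 + Y 0 0) := by
              apply le_of_eq; abel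
          _ ≤ _ := add_le_add le_rfl hc
      · refine le_trans ?_ (add_le_add (term4_le X Y Y X 0 0 0 1 1) le_rfl)
        calc _ = X 0 0 + Y 0 0 + Y 0 1 + (X 0 0 + Y 0 0) := by abel
          _ ≤ X 0 0 + Y 0 0 + Y 0 1 + (X 1 1 + Y 1 1) := add_le_add le_rfl hc
          _ = _ := by abel
    · simp only [if_true, mul_assoc X Y (evalM _ _ _), mul_assoc (del 1 X)]
      refine step_left hY _ (X 1 1 + Y 1 1) _ rfl rfl hc ?_ ?_ ih hW j
      · refine le_trans ?_ (add_le_add (term4_le X Y Y X 0 0 1 1 1) le_rfl)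
        calc _ = (X 0 0 + Y 0 1) + ((X 0 0 + Y 0 0) + (X 0 0 + Y 0 0)) := by abel
          _ ≤ (X 0 0 + Y 0 1) + ((X 1 1 + Y 1 1) + (X 1 1 + Y 1 1)) :=
              add_le_add le_rfl (add_le_add hc hc)
          _ = _ := by abel
      · refine le_trans ?_ (add_le_add (term4_le X Y Y X 0 1 1 1 1) le_rfl)
        calc _ = X 0 1 + ((X 0 0 + Y 0 0) + (X 0 0 + Y 0 0)) := by abel
          _ ≤ X 0 1 + ((X 1 1 + Y 1 1) + (X 1 1 + Y 1 1)) :=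
              add_le_add le_rfl (add_le_add hc hc)
          _ = _ := by abel

theorem claim_right {X Y : TMat (Fin 5)} (hX : IsUT X) (hY : IsUT Y)
    (hc : X 4 4 + Y 4 4 ≤ X 3 3 + Y 3 3) (u : List Bool) (i : Fin 4) :
    (X 4 4 + Y 4 4) + (X 4 4 + Y 4 4) + evalM u (X * Y) (Y * X) ((3 : Fin 5).succAbove i) 4 ≤
      max ((X 4 4 + Y 4 4) + (X 4 4 + Y 4 4) +
          evalM u (del 3 X * del 3 Y) (del 3 Y * del 3 X) i 3)
        (((X * Y) * (Y * X)) 3 4 + evalM u (X * Y) (Y * X) ((3 : Fin 5).succAbove i) 3) := by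
  induction u using List.reverseRecOn generalizing i with
  | nil =>
    refine le_max_of_le_left (add_le_add le_rfl ?_)
    rw [evalM_nil, evalM_nil]
    by_cases h : i = 3
    · subst h; rw [TMat.one_self]; exact (TMat.one_self (4 : Fin 5)).le
    · rw [TMat.one_ne]
      · exact bot_le
      · revert h; revert i; decide
  | append_singleton u c ih =>
    have hW : ∀ i j, (3 : Fin 5).succAbove j < (3 : Fin 5) →
        evalM u (X * Y) (Y * X) ((3 : Fin 5).succAbove i) ((3 : Fin 5).succAbove j) ≤
        evalM u (del 3 X * del 3 Y) (del 3 Y * del 3 X) i j := by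
      intro i j hi
      rw [← evalM_subst, ← evalM_subst]
      exact le_del_right 3 hX hY _ i j hi
    rw [evalM_append, evalM_append, evalM_cons, evalM_nil, mul_one, evalM_cons, evalM_nil, mul_one]
    cases c
    · refine step_right hY _ (X 3 3 + Y 3 3) _ (add_comm _ _) (add_comm _ _) hc ?_ ?_ ih hW i
      · refine le_trans ?_ (add_le_add (term4_le X Y Y X 3 3 3 4 4) le_rfl)
        calc _ = (Y 3 4 + X 4 4) + ((X 4 4 + Y 4 4) + (X 4 4 + Y 4 4)) := by abel
          _ ≤ (Y 3 4 + X 4 4) + ((X 3 3 + Y 3 3) + (X 3 3 + Y 3 3)) :=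
              add_le_add le_rfl (add_le_add hc hc)
          _ = _ := by abel
      · refine le_trans ?_ (add_le_add (term4_le X Y Y X 3 3 3 3 4) le_rfl)
        calc _ = X 3 4 + ((X 4 4 + Y 4 4) + (X 4 4 + Y 4 4)) := by abel
          _ ≤ X 3 4 + ((X 3 3 + Y 3 3) + (X 3 3 + Y 3 3)) :=
              add_le_add le_rfl (add_le_add hc hc)
          _ = _ := by abel
    · refine step_right hX _ (X 3 3 + Y 3 3) _ rfl rfl hc ?_ ?_ ih hW i
      · refine le_trans ?_ (add_le_add (term4_le X Y Y X 3 4 4 4 4) le_rfl)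
        calc _ = (X 3 4 + Y 4 4) + (X 4 4 + Y 4 4) + (X 4 4 + Y 4 4) := by abel
          _ ≤ (X 3 4 + Y 4 4) + (X 4 4 + Y 4 4) + (X 3 3 + Y 3 3) :=
              add_le_add le_rfl hc
          _ = _ := by abel
      · refine le_trans ?_ (add_le_add (term4_le X Y Y X 3 3 4 4 4) le_rfl)
        calc _ = Y 3 4 + (X 4 4 + Y 4 4) + (X 4 4 + Y 4 4) := by abel
          _ ≤ Y 3 4 + (X 4 4 + Y 4 4) + (X 3 3 + Y 3 3) := add_le_add le_rfl hc
          _ = _ := by abel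

/-- The hypothesis of the theorem, in monoid form. -/
def HypUT4 (u v : List Bool) : Prop :=
  ∀ X Y : TMat (Fin 4), IsUT X → IsUT Y → evalM u (X * Y) (Y * X) = evalM v (X * Y) (Y * X)

theorem del_transfer {u v : List Bool} (h : HypUT4 u v) (m : Fin 5) {X Y : TMat (Fin 5)}
    (hX : IsUT X) (hY : IsUT Y) (i j : Fin 4) :
    evalM u (del m X * del m Y) (del m Y * del m X) i j ≤
      evalM v (X * Y) (Y * X) (m.succAbove i) (m.succAbove j) := by
  rw [h _ _ (del_UT m hX) (del_UT m hY), ← evalM_subst, ← evalM_subst]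
  exact del_le m X Y _ i j

theorem ut5_short {u v : List Bool} (h : HypUT4 u v) {X Y : TMat (Fin 5)}
    (hX : IsUT X) (hY : IsUT Y) (k l : Fin 5) (hkl : k ≠ 0 ∨ l ≠ 4) :
    evalM u (X * Y) (Y * X) k l ≤ evalM v (X * Y) (Y * X) k l := by
  by_cases hlk : l < k
  · rw [(hX.mul hY).evalM (hY.mul hX) u k l hlk]; exact bot_le
  by_cases hk : k = 0
  · have hl : l ≠ 4 := by tauto
    have hk4 : k ≠ 4 := by omega
    obtain ⟨k', rfl⟩ := Fin.exists_succAbove_eq hk4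
    obtain ⟨l', rfl⟩ := Fin.exists_succAbove_eq hl
    refine le_trans ?_ (del_transfer h 4 hX hY k' l')
    rw [← evalM_subst, ← evalM_subst]
    exact le_del_right 4 hX hY _ _ _
      ((by decide : ∀ l : Fin 4, (4 : Fin 5).succAbove l < 4) l')
  · have hl : l ≠ 0 := by omega
    obtain ⟨k', rfl⟩ := Fin.exists_succAbove_eq hk
    obtain ⟨l', rfl⟩ := Fin.exists_succAbove_eq hl
    refine le_trans ?_ (del_transfer h 0 hX hY k' l')
    rw [← evalM_subst, ← evalM_subst]
    exact le_del_left 0 hX hY _ _ _ (by omega)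

theorem diag_pre {X Y : TMat (Fin 5)} (hX : IsUT X) (hY : IsUT Y) (i : Fin 5) :
    ((X * Y) * (Y * X)) i i = (X i i + Y i i) + (X i i + Y i i) := by
  rw [(hX.mul hY).diag_mul (hY.mul hX), hX.diag_mul hY, hY.diag_mul hX, add_comm (Y i i)]

theorem ut5_le {u v : List Bool} (h : HypUT4 u v) {X Y : TMat (Fin 5)}
    (hX : IsUT X) (hY : IsUT Y)
    (hc : X 0 0 + Y 0 0 ≤ X 1 1 + Y 1 1 ∨ X 4 4 + Y 4 4 ≤ X 3 3 + Y 3 3) (i j : Fin 5) :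
    (((X * Y) * (Y * X)) * evalM u (X * Y) (Y * X) * ((X * Y) * (Y * X))) i j ≤
    (((X * Y) * (Y * X)) * evalM v (X * Y) (Y * X) * ((X * Y) * (Y * X))) i j := by
  rw [mul_assoc ((X * Y) * (Y * X)), mul_assoc ((X * Y) * (Y * X))]
  refine le_trans (zero_add _).ge ?_
  apply add_mul3_le
  intro k l
  rw [zero_add]
  have hpre : IsUT ((X * Y) * (Y * X) : TMat (Fin 5)) := (hX.mul hY).mul (hY.mul hX)
  by_cases hkl : k ≠ 0 ∨ l ≠ 4
  · refine le_trans ?_ (TMat.term3_le _ _ _ i k l j)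
    exact add_le_add le_rfl (add_le_add (ut5_short h hX hY k l hkl) le_rfl)
  obtain ⟨rfl, rfl⟩ : k = 0 ∧ l = 4 := by tauto
  by_cases hi : 0 < i
  · rw [hpre i 0 hi]; simp
  by_cases hj : j < 4
  · rw [hpre 4 j hj]; simp
  obtain rfl : i = 0 := by omega
  obtain rfl : j = 4 := by omega
  rcases hc with hc | hc
  · have := claim_left hX hY hc u 3
    rw [← add_assoc]
    rw [diag_pre hX hY 0]
    refine le_trans (add_le_add this le_rfl) ?_
    rw [max_add]
    apply max_le
    · rw [← diag_pre hX hY 0, add_assoc]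
      refine le_trans ?_ (TMat.term3_le _ _ _ 0 0 4 4)
      exact add_le_add le_rfl (add_le_add (del_transfer h 1 hX hY 0 3) le_rfl)
    · rw [add_assoc]
      refine le_trans ?_ (TMat.term3_le _ _ _ 0 1 4 4)
      exact add_le_add le_rfl (add_le_add (ut5_short h hX hY 1 4 (by decide)) le_rfl)
  · have := claim_right hX hY hc u 0
    rw [diag_pre hX hY 4, add_comm (evalM u (X * Y) (Y * X) 0 4)]
    refine le_trans (add_le_add le_rfl this) ?_
    rw [add_max]
    apply max_le
    · rw [← diag_pre hX hY 4, add_comm (((X * Y) * (Y * X)) 4 4)]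
      refine le_trans ?_ (TMat.term3_le _ _ _ 0 0 4 4)
      exact add_le_add le_rfl (add_le_add (del_transfer h 3 hX hY 0 3) le_rfl)
    · rw [add_comm (((X * Y) * (Y * X)) 3 4)]
      refine le_trans ?_ (TMat.term3_le _ _ _ 0 0 3 4)
      exact add_le_add le_rfl (add_le_add (ut5_short h hX hY 0 3 (by decide)) le_rfl)

theorem ut5_eq {u v : List Bool} (h : HypUT4 u v) {X Y : TMat (Fin 5)}
    (hX : IsUT X) (hY : IsUT Y)
    (hc : X 0 0 + Y 0 0 ≤ X 1 1 + Y 1 1 ∨ X 4 4 + Y 4 4 ≤ X 3 3 + Y 3 3) :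
    ((X * Y) * (Y * X)) * evalM u (X * Y) (Y * X) * ((X * Y) * (Y * X)) =
    ((X * Y) * (Y * X)) * evalM v (X * Y) (Y * X) * ((X * Y) * (Y * X)) := by
  funext i j
  apply le_antisymm
  · exact ut5_le h hX hY hc i j
  · exact ut5_le (fun X Y hX hY => (h X Y hX hY).symm) hX hY hc i j

/-! ### Tropical automata: matrices from diagonal weights and edges -/

/-- Letter matrices with diagonal weights `D` and unit edges `E`. -/
noncomputable def letM {n : ℕ} (D : Fin 4 → Fin n → ℕ) (E : Fin 4 → Fin n → Fin n → Bool)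
    (x : Fin 4) : TMat (Fin n) := fun i j =>
  if i = j then (((D x i : ℕ) : ℝ) : Trop) else if E x i j then ((1 : ℝ) : Trop) else ⊥

/-- Action of a letter on a vector of natural numbers. -/
def stp {n : ℕ} (D : Fin 4 → Fin n → ℕ) (E : Fin 4 → Fin n → Fin n → Bool)
    (v : Fin n → ℕ) (x : Fin 4) : Fin n → ℕ := fun j =>
  Finset.univ.sup fun i => if i = j then v j + D x j else if E x i j then v i + 1 else 0

/-- Action of a word on a vector. -/
def act {S : Type} (σ : S → Fin 4 → S) (v : S) (W : FreeMonoid (Fin 4)) : S :=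
  (FreeMonoid.toList W).foldl σ v

theorem act_one {S : Type} (σ : S → Fin 4 → S) (v : S) : act σ v 1 = v := rfl

theorem act_mul {S : Type} (σ : S → Fin 4 → S) (v : S) (W W' : FreeMonoid (Fin 4)) :
    act σ v (W * W') = act σ (act σ v W) W' := by
  simp [act, FreeMonoid.toList_mul, List.foldl_append]

theorem act_of {S : Type} (σ : S → Fin 4 → S) (v : S) (x : Fin 4) :
    act σ v (FreeMonoid.of x) = σ v x := by
  simp [act, FreeMonoid.toList_of]

/-- The representation of the free monoid. -/
noncomputable def rep {n : ℕ} (D : Fin 4 → Fin n → ℕ) (E : Fin 4 → Fin n → Fin n → Bool) :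
    FreeMonoid (Fin 4) →* TMat (Fin n) := FreeMonoid.lift (letM D E)

theorem letM_UT {n : ℕ} {D : Fin 4 → Fin n → ℕ} {E : Fin 4 → Fin n → Fin n → Bool}
    (hE : ∀ x i j, E x i j = true → i < j) (x : Fin 4) : IsUT (letM D E x) := by
  intro i j hij
  have h1 : i ≠ j := by rintro rfl; omega
  have h2 : E x i j = false := by
    by_contra h
    have := hE x i j (by simpa using h)
    omega
  simp [letM, h1, h2]

theorem rep_UT {n : ℕ} {D : Fin 4 → Fin n → ℕ} {E : Fin 4 → Fin n → Fin n → Bool}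
    (hE : ∀ x i j, E x i j = true → i < j) (W : FreeMonoid (Fin 4)) : IsUT (rep D E W) := by
  induction W using FreeMonoid.recOn with
  | one => rw [map_one]; exact IsUT.one
  | of_mul x W ih =>
    rw [map_mul]
    refine IsUT.mul ?_ ih
    simpa [rep] using letM_UT hE x

theorem rep_diag {n : ℕ} {D : Fin 4 → Fin n → ℕ} {E : Fin 4 → Fin n → Fin n → Bool}
    (hE : ∀ x i j, E x i j = true → i < j) (W : FreeMonoid (Fin 4)) (i : Fin n) :
    rep D E W i i = (((((FreeMonoid.toList W).map fun x => D x i).sum : ℕ) : ℝ) : Trop) := by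
  induction W using FreeMonoid.recOn with
  | one => rw [map_one, TMat.one_self]; simp
  | of_mul x W ih =>
    rw [map_mul, IsUT.diag_mul (by simpa [rep] using letM_UT hE x) (rep_UT hE W), ih]
    simp [rep, letM]

theorem sup_letM {n : ℕ} (D : Fin 4 → Fin n → ℕ) (E : Fin 4 → Fin n → Fin n → Bool)
    (v : Fin n → ℕ) (x : Fin 4) (j : Fin n) :
    (Finset.univ.sup fun k => (((v k : ℕ) : ℝ) : Trop) + letM D E x k j) =
      (((stp D E v x j : ℕ) : ℝ) : Trop) := by
  apply le_antisymm
  · apply Finset.sup_le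
    intro k _
    have hk : (if k = j then v j + D x j else if E x k j then v k + 1 else 0) ≤ stp D E v x j :=
      Finset.le_sup (f := fun i => if i = j then v j + D x j else if E x i j then v i + 1 else 0)
        (Finset.mem_univ k)
    unfold letM
    by_cases h : k = j
    · subst h
      simp only [if_true] at hk ⊢
      exact_mod_cast hk
    · by_cases h' : E x k j
      · simp only [h, h', if_true, if_false] at hk ⊢
        exact_mod_cast hk
      · simp [h, h']
  · obtain ⟨k, -, hk⟩ := Finset.exists_mem_eq_sup (Finset.univ : Finset (Fin n)) ⟨j, Finset.mem_univ j⟩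
      (fun i => if i = j then v j + D x j else if E x i j then v i + 1 else 0)
    have hk' : stp D E v x j = _ := hk
    have key : ∀ k, (((v k : ℕ) : ℝ) : Trop) + letM D E x k j ≤
      Finset.univ.sup fun k => (((v k : ℕ) : ℝ) : Trop) + letM D E x k j := fun k =>
        Finset.le_sup (f := fun k => (((v k : ℕ) : ℝ) : Trop) + letM D E x k j) (Finset.mem_univ k)
    rw [hk']
    by_cases h : k = j
    · subst h
      refine le_trans ?_ (key k)
      simp [letM]
    · by_cases h' : E x k j
      · refine le_trans ?_ (key k)
        simp [letM, h, h']
      · refine le_trans ?_ (key j)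
        simp only [h, h', letM, if_true, if_false]
        norm_cast
        exact Nat.zero_le _

theorem rep_act {n : ℕ} (D : Fin 4 → Fin n → ℕ) (E : Fin 4 → Fin n → Fin n → Bool)
    (W : FreeMonoid (Fin 4)) (j : Fin n) :
    (Finset.univ.sup fun i => rep D E W i j) =
      (((act (stp D E) (fun _ => 0) W j : ℕ) : ℝ) : Trop) := by
  suffices H : ∀ l : List (Fin 4), ∀ j, (Finset.univ.sup fun i => rep D E (FreeMonoid.ofList l) i j) =
      (((act (stp D E) (fun _ => 0) (FreeMonoid.ofList l) j : ℕ) : ℝ) : Trop) from H W.toList j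
  intro l
  induction l using List.reverseRecOn with
  | nil =>
    intro j
    rw [FreeMonoid.ofList_nil, map_one, act_one]
    apply le_antisymm
    · apply Finset.sup_le
      intro i _
      by_cases h : i = j
      · subst h; rw [TMat.one_self]; simp
      · rw [TMat.one_ne h]; exact bot_le
    · refine le_trans ?_ (Finset.le_sup (Finset.mem_univ j))
      rw [TMat.one_self]; simp
  | append_singleton l x ih =>
    intro j
    rw [FreeMonoid.ofList_append, FreeMonoid.ofList_singleton, map_mul, act_mul, act_of,
      ← sup_letM]
    simp only [← ih, trop_sup_add]
    rw [Finset.sup_comm]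
    have : rep D E (FreeMonoid.of x) = letM D E x := by simp [rep]
    rw [← this]
    rfl

theorem act_eq_of_rep {n : ℕ} (D : Fin 4 → Fin n → ℕ) (E : Fin 4 → Fin n → Fin n → Bool)
    {W W' : FreeMonoid (Fin 4)} (h : rep D E W = rep D E W') :
    act (stp D E) (fun _ => 0) W = act (stp D E) (fun _ => 0) W' := by
  funext j
  have := rep_act D E W j
  rw [h, rep_act D E W' j] at this
  exact_mod_cast this.symm

/-- The word `(xy)(yx) u[xy,yx] (xy)(yx)` in a monoid. -/
def longW {M : Type*} [Monoid M] (u : List Bool) (x y : M) : M :=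
  ((x * y) * (y * x)) * evalM u (x * y) (y * x) * ((x * y) * (y * x))

theorem longW_map {M N : Type*} [Monoid M] [Monoid N] (f : M →* N) (w : List Bool) (x y : M) :
    f (longW w x y) = longW w (f x) (f y) := by
  simp [longW, evalM_map]

theorem act4_eq {D : Fin 4 → Fin 4 → ℕ} {E : Fin 4 → Fin 4 → Fin 4 → Bool}
    (hE : ∀ x i j, E x i j = true → i < j) {u v : List Bool} (h : HypUT4 u v)
    (X Y : FreeMonoid (Fin 4)) :
    act (stp D E) (fun _ => 0) (longW u X Y) = act (stp D E) (fun _ => 0) (longW v X Y) := by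
  apply act_eq_of_rep
  rw [longW_map, longW_map, longW, longW, h _ _ (rep_UT hE X) (rep_UT hE Y)]

theorem act5_eq {D : Fin 4 → Fin 5 → ℕ} {E : Fin 4 → Fin 5 → Fin 5 → Bool}
    (hE : ∀ x i j, E x i j = true → i < j) (hD : ∀ x, D x 0 + D x 4 = D x 1 + D x 3)
    {u v : List Bool} (h : HypUT4 u v) (X Y : FreeMonoid (Fin 4)) :
    act (stp D E) (fun _ => 0) (longW u X Y) = act (stp D E) (fun _ => 0) (longW v X Y) := by
  apply act_eq_of_rep
  rw [longW_map, longW_map]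
  refine ut5_eq h (rep_UT hE X) (rep_UT hE Y) ?_
  simp only [rep_diag hE]
  have key : ∀ W : List (Fin 4), (W.map fun x => D x 0).sum + (W.map fun x => D x 4).sum =
      (W.map fun x => D x 1).sum + (W.map fun x => D x 3).sum := by
    intro W
    induction W with
    | nil => rfl
    | cons x W ih => have := hD x; simp only [List.map_cons, List.sum_cons]; omega
  have h1 := key X.toList
  have h2 := key Y.toList
  norm_cast
  omega

/-! ### The concrete automata -/

/-- One-row automaton (with multiplicity). -/
def sg1n (v : Fin 4 → ℕ) (x : Fin 4) (n : ℕ) : Fin 4 → ℕ :=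
  match x with
  | 0 => ![v 0 + n, max (v 1) (v 0 + n), max (v 2) (v 0 + n), max (v 3) (v 0 + n)]
  | 1 => ![v 0, v 1 + n, max (v 2) (v 1 + n), max (v 3) (v 1 + n)]
  | 2 => ![v 0, v 1, v 2 + n, max (v 3) (v 2 + n)]
  | 3 => ![v 0, v 1, v 2, v 3 + n]

/-- Three-row automaton. -/
def sg3n (v : Fin 4 → ℕ) (x : Fin 4) (n : ℕ) : Fin 4 → ℕ :=
  match x with
  | 0 => ![v 0 + n, v 1 + n, v 2 + n, max (v 3) (v 2 + n)]
  | 1 => ![v 0 + n, v 1 + n, max (v 2) (v 1 + n), v 3 + n]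
  | 2 => ![v 0 + n, max (v 1) (v 0 + n), v 2 + n, v 3 + n]
  | 3 => ![v 0, v 1 + n, v 2 + n, v 3 + n]

/-- Two-row automaton; states 12, 13, 14, 23, 24, 34. -/
def sg2n (v : Fin 6 → ℕ) (x : Fin 4) (n : ℕ) : Fin 6 → ℕ :=
  match x with
  | 0 => ![v 0 + n, v 1 + n, v 2 + n, max (v 3) (v 1 + n), max (v 4) (v 2 + n),
      max (v 5) (v 2 + n)]
  | 1 => ![v 0 + n, max (v 1) (v 0 + n), max (v 2) (v 0 + n), v 3 + n, v 4 + n,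
      max (v 5) (v 4 + n)]
  | 2 => ![v 0, v 1 + n, max (v 2) (v 1 + n), v 3 + n, max (v 4) (v 3 + n), v 5 + n]
  | 3 => ![v 0, v 1, v 2 + n, v 3, v 4 + n, v 5 + n]

/-- The length automaton. -/
def sg4n (v : ℕ) (_x : Fin 4) (n : ℕ) : ℕ := v + n

def D1 : Fin 4 → Fin 4 → ℕ := fun x i => if i = x then 1 else 0
def E1 : Fin 4 → Fin 4 → Fin 4 → Bool := fun x i j => i = x && i < j
def D3 : Fin 4 → Fin 4 → ℕ := ![![1, 1, 1, 0], ![1, 1, 0, 1], ![1, 0, 1, 1], ![0, 1, 1, 1]]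
def E3 : Fin 4 → Fin 4 → Fin 4 → Bool := fun x i j =>
  (x, i, j) ∈ ([(0, 2, 3), (1, 1, 2), (2, 0, 1)] : List (Fin 4 × Fin 4 × Fin 4))
def D4 : Fin 4 → Fin 4 → ℕ := fun _ _ => 1
def E4 : Fin 4 → Fin 4 → Fin 4 → Bool := fun _ _ _ => false
def DA : Fin 4 → Fin 5 → ℕ :=
  ![![1, 1, 1, 0, 0], ![1, 0, 0, 1, 0], ![0, 1, 0, 0, 1], ![0, 0, 1, 1, 1]]
def EA : Fin 4 → Fin 5 → Fin 5 → Bool := fun x i j =>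
  (x, i, j) ∈ ([(0, 2, 3), (0, 2, 4), (1, 0, 1), (1, 0, 2), (1, 3, 4), (2, 1, 2)] :
    List (Fin 4 × Fin 5 × Fin 5))
def DB : Fin 4 → Fin 5 → ℕ :=
  ![![1, 1, 0, 0, 0], ![1, 0, 1, 1, 0], ![0, 1, 1, 0, 1], ![0, 0, 0, 1, 1]]
def EB : Fin 4 → Fin 5 → Fin 5 → Bool := fun x i j =>
  (x, i, j) ∈ ([(0, 1, 2), (1, 0, 1), (1, 3, 4), (2, 2, 3)] : List (Fin 4 × Fin 5 × Fin 5))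

theorem stp1 (v : Fin 4 → ℕ) (x : Fin 4) : stp D1 E1 v x = sg1n v x 1 := by
  funext j
  fin_cases x <;> fin_cases j <;>
    simp [stp, sg1n, D1, E1, Fin.univ_succ] <;> omega

theorem stp3 (v : Fin 4 → ℕ) (x : Fin 4) : stp D3 E3 v x = sg3n v x 1 := by
  funext j
  fin_cases x <;> fin_cases j <;>
    simp [stp, sg3n, D3, E3, Fin.univ_succ] <;> omega

theorem stp4 (v : Fin 4 → ℕ) (x : Fin 4) : stp D4 E4 v x 0 = sg4n (v 0) x 1 := by
  simp [stp, sg4n, D4, E4, Fin.univ_succ]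

/-- Relation between the 6-state automaton and its two 5-chains. -/
def Rel6 (v : Fin 6 → ℕ) (a b : Fin 5 → ℕ) : Prop :=
  v 0 = a 0 ∧ v 0 = b 0 ∧ v 1 = a 1 ∧ v 1 = b 1 ∧ v 2 = a 2 ∧ v 3 = b 2 ∧
    v 4 = max (a 3) (b 3) ∧ v 5 = max (a 4) (b 4)

theorem rel6_step (v : Fin 6 → ℕ) (a b : Fin 5 → ℕ) (h : Rel6 v a b) (x : Fin 4) :
    Rel6 (sg2n v x 1) (stp DA EA a x) (stp DB EB b x) := by
  obtain ⟨h0, h1, h2, h3, h4, h5, h6, h7⟩ := h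
  unfold Rel6
  fin_cases x <;>
    simp [stp, sg2n, DA, EA, DB, EB, Fin.univ_succ] <;> omega

theorem rel6_act (W : FreeMonoid (Fin 4)) (v : Fin 6 → ℕ) (a b : Fin 5 → ℕ) (h : Rel6 v a b) :
    Rel6 (act (fun v x => sg2n v x 1) v W) (act (stp DA EA) a W) (act (stp DB EB) b W) := by
  induction W using FreeMonoid.recOn generalizing v a b with
  | one => exact h
  | of_mul x W ih =>
    simp only [act_mul, act_of]
    exact ih _ _ _ (rel6_step v a b h x)

theorem rel6_inj {v v' : Fin 6 → ℕ} {a b : Fin 5 → ℕ} (h : Rel6 v a b) (h' : Rel6 v' a b) :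
    v = v' := by
  unfold Rel6 at h h'
  funext i
  fin_cases i <;> simp <;> omega

theorem inv1 {u v : List Bool} (h : HypUT4 u v) (X Y : FreeMonoid (Fin 4)) :
    act (fun v x => sg1n v x 1) (fun _ => 0) (longW u X Y) =
      act (fun v x => sg1n v x 1) (fun _ => 0) (longW v X Y) := by
  have := act4_eq (D := D1) (E := E1) (by decide) h X Y
  rwa [show stp D1 E1 = fun v x => sg1n v x 1 from funext fun v => funext fun x => stp1 v x] at this

theorem inv3 {u v : List Bool} (h : HypUT4 u v) (X Y : FreeMonoid (Fin 4)) :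
    act (fun v x => sg3n v x 1) (fun _ => 0) (longW u X Y) =
      act (fun v x => sg3n v x 1) (fun _ => 0) (longW v X Y) := by
  have := act4_eq (D := D3) (E := E3) (by decide) h X Y
  rwa [show stp D3 E3 = fun v x => sg3n v x 1 from funext fun v => funext fun x => stp3 v x] at this

theorem act_stp4 (W : FreeMonoid (Fin 4)) (v : Fin 4 → ℕ) :
    act (stp D4 E4) v W 0 = act (fun v x => sg4n v x 1) (v 0) W := by
  induction W using FreeMonoid.recOn generalizing v with
  | one => rfl
  | of_mul x W ih => simp only [act_mul, act_of]; rw [ih, stp4]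

theorem inv4 {u v : List Bool} (h : HypUT4 u v) (X Y : FreeMonoid (Fin 4)) :
    act (fun v x => sg4n v x 1) 0 (longW u X Y) =
      act (fun v x => sg4n v x 1) 0 (longW v X Y) := by
  have := congrFun (act4_eq (D := D4) (E := E4) (by decide) h X Y) 0
  rwa [act_stp4, act_stp4] at this

theorem inv2 {u v : List Bool} (h : HypUT4 u v) (X Y : FreeMonoid (Fin 4)) :
    act (fun v x => sg2n v x 1) (fun _ => 0) (longW u X Y) =
      act (fun v x => sg2n v x 1) (fun _ => 0) (longW v X Y) := by
  have hA := act5_eq (D := DA) (E := EA) (by decide) (by decide) h X Y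
  have hB := act5_eq (D := DB) (E := EB) (by decide) (by decide) h X Y
  have h0 : Rel6 (fun _ => 0) (fun _ => 0) (fun _ => 0) := by simp [Rel6]
  have h1 := rel6_act (longW u X Y) _ _ _ h0
  have h2 := rel6_act (longW v X Y) _ _ _ h0
  rw [← hA, ← hB] at h2
  exact rel6_inj h1 h2

theorem e1 (v : Fin 4 → ℕ) (n : ℕ) :
    (sg1n v 0 n 0 = v 0 + n ∧ sg1n v 0 n 1 = max (v 1) (v 0 + n) ∧
      sg1n v 0 n 2 = max (v 2) (v 0 + n) ∧ sg1n v 0 n 3 = max (v 3) (v 0 + n)) ∧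
    (sg1n v 1 n 0 = v 0 ∧ sg1n v 1 n 1 = v 1 + n ∧
      sg1n v 1 n 2 = max (v 2) (v 1 + n) ∧ sg1n v 1 n 3 = max (v 3) (v 1 + n)) ∧
    (sg1n v 2 n 0 = v 0 ∧ sg1n v 2 n 1 = v 1 ∧ sg1n v 2 n 2 = v 2 + n ∧
      sg1n v 2 n 3 = max (v 3) (v 2 + n)) ∧
    (sg1n v 3 n 0 = v 0 ∧ sg1n v 3 n 1 = v 1 ∧ sg1n v 3 n 2 = v 2 ∧ sg1n v 3 n 3 = v 3 + n) :=
  ⟨⟨rfl, rfl, rfl, rfl⟩, ⟨rfl, rfl, rfl, rfl⟩, ⟨rfl, rfl, rfl, rfl⟩, ⟨rfl, rfl, rfl, rfl⟩⟩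

theorem e3 (v : Fin 4 → ℕ) (n : ℕ) :
    (sg3n v 0 n 0 = v 0 + n ∧ sg3n v 0 n 1 = v 1 + n ∧ sg3n v 0 n 2 = v 2 + n ∧
      sg3n v 0 n 3 = max (v 3) (v 2 + n)) ∧
    (sg3n v 1 n 0 = v 0 + n ∧ sg3n v 1 n 1 = v 1 + n ∧ sg3n v 1 n 2 = max (v 2) (v 1 + n) ∧
      sg3n v 1 n 3 = v 3 + n) ∧
    (sg3n v 2 n 0 = v 0 + n ∧ sg3n v 2 n 1 = max (v 1) (v 0 + n) ∧ sg3n v 2 n 2 = v 2 + n ∧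
      sg3n v 2 n 3 = v 3 + n) ∧
    (sg3n v 3 n 0 = v 0 ∧ sg3n v 3 n 1 = v 1 + n ∧ sg3n v 3 n 2 = v 2 + n ∧
      sg3n v 3 n 3 = v 3 + n) :=
  ⟨⟨rfl, rfl, rfl, rfl⟩, ⟨rfl, rfl, rfl, rfl⟩, ⟨rfl, rfl, rfl, rfl⟩, ⟨rfl, rfl, rfl, rfl⟩⟩

theorem e2 (v : Fin 6 → ℕ) (n : ℕ) :
    (sg2n v 0 n 0 = v 0 + n ∧ sg2n v 0 n 1 = v 1 + n ∧ sg2n v 0 n 2 = v 2 + n ∧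
      sg2n v 0 n 3 = max (v 3) (v 1 + n) ∧ sg2n v 0 n 4 = max (v 4) (v 2 + n) ∧
      sg2n v 0 n 5 = max (v 5) (v 2 + n)) ∧
    (sg2n v 1 n 0 = v 0 + n ∧ sg2n v 1 n 1 = max (v 1) (v 0 + n) ∧
      sg2n v 1 n 2 = max (v 2) (v 0 + n) ∧ sg2n v 1 n 3 = v 3 + n ∧ sg2n v 1 n 4 = v 4 + n ∧
      sg2n v 1 n 5 = max (v 5) (v 4 + n)) ∧
    (sg2n v 2 n 0 = v 0 ∧ sg2n v 2 n 1 = v 1 + n ∧ sg2n v 2 n 2 = max (v 2) (v 1 + n) ∧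
      sg2n v 2 n 3 = v 3 + n ∧ sg2n v 2 n 4 = max (v 4) (v 3 + n) ∧ sg2n v 2 n 5 = v 5 + n) ∧
    (sg2n v 3 n 0 = v 0 ∧ sg2n v 3 n 1 = v 1 ∧ sg2n v 3 n 2 = v 2 + n ∧ sg2n v 3 n 3 = v 3 ∧
      sg2n v 3 n 4 = v 4 + n ∧ sg2n v 3 n 5 = v 5 + n) :=
  ⟨⟨rfl, rfl, rfl, rfl, rfl, rfl⟩, ⟨rfl, rfl, rfl, rfl, rfl, rfl⟩,
    ⟨rfl, rfl, rfl, rfl, rfl, rfl⟩, ⟨rfl, rfl, rfl, rfl, rfl, rfl⟩⟩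

/-! ### Invariance under the Knuth relations -/

/-- The class of a word in the plactic monoid. -/
def cls : FreeMonoid (Fin 4) →* P4 := (conGen KnuthRel).mk'

theorem act_mono {S : Type} {σ : S → Fin 4 → S} {Mono : S → Prop}
    (pres : ∀ v x, Mono v → Mono (σ v x)) (W : FreeMonoid (Fin 4)) (v : S) (hv : Mono v) :
    Mono (act σ v W) := by
  induction W using FreeMonoid.recOn generalizing v with
  | one => exact hv
  | of_mul x W ih => rw [act_mul, act_of]; exact ih _ (pres v x hv)

theorem act_knuth {S : Type} {σ : S → Fin 4 → S} {Mono : S → Prop}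
    (pres : ∀ v x, Mono v → Mono (σ v x))
    (K1 : ∀ a b c : Fin 4, a < b → b ≤ c → ∀ v, Mono v → σ (σ (σ v b) c) a = σ (σ (σ v b) a) c)
    (K2 : ∀ a b c : Fin 4, a ≤ b → b < c → ∀ v, Mono v → σ (σ (σ v c) a) b = σ (σ (σ v a) c) b)
    {W W' : FreeMonoid (Fin 4)} (h : cls W = cls W') (v : S) (hv : Mono v) :
    act σ v W = act σ v W' := by
  let C : Con (FreeMonoid (Fin 4)) :=
    { r := fun W W' => ∀ v, Mono v → act σ v W = act σ v W'
      iseqv := ⟨fun _ _ _ => rfl, fun h v hv => (h v hv).symm,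
        fun h h' v hv => (h v hv).trans (h' v hv)⟩
      mul' := by
        intro a b c d h1 h2 v hv
        rw [act_mul, act_mul, h1 v hv]
        exact h2 _ (act_mono pres _ _ hv) }
  have hle : conGen KnuthRel ≤ C := by
    refine Con.conGen_le.2 ?_
    intro x y hxy v hv
    rcases hxy with ⟨a, b, c, h1, h2, rfl, rfl⟩ | ⟨a, b, c, h1, h2, rfl, rfl⟩
    · simp only [act_mul, act_of]; exact K1 a b c h1 h2 v hv
    · simp only [act_mul, act_of]; exact K2 a b c h1 h2 v hv
  exact hle ((Con.eq _).1 h) v hv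

theorem act_pow {S : Type} {σ : S → Fin 4 → ℕ → S} {Mono : S → Prop}
    (h0 : ∀ v x, Mono v → σ v x 0 = v)
    (hs : ∀ v x n, σ (σ v x n) x 1 = σ v x (n + 1)) (v : S) (hv : Mono v) (x : Fin 4) (n : ℕ) :
    act (fun v x => σ v x 1) v (FreeMonoid.of x ^ n) = σ v x n := by
  induction n with
  | zero => rw [pow_zero, act_one, h0 v x hv]
  | succ n ih => rw [pow_succ, act_mul, act_of, ih, hs]

def Mono4 (v : Fin 4 → ℕ) : Prop := v 0 ≤ v 1 ∧ v 1 ≤ v 2 ∧ v 2 ≤ v 3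
def Mono6 (v : Fin 6 → ℕ) : Prop :=
  v 0 ≤ v 1 ∧ v 1 ≤ v 2 ∧ v 1 ≤ v 3 ∧ v 2 ≤ v 4 ∧ v 3 ≤ v 4 ∧ v 4 ≤ v 5

theorem pres1 (v : Fin 4 → ℕ) (x : Fin 4) (n : ℕ) (h : Mono4 v) : Mono4 (sg1n v x n) := by
  unfold Mono4 at *
  fin_cases x <;> simp [sg1n] <;> omega

theorem pres3 (v : Fin 4 → ℕ) (x : Fin 4) (n : ℕ) (h : Mono4 v) : Mono4 (sg3n v x n) := by
  unfold Mono4 at *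
  fin_cases x <;> simp [sg3n] <;> omega

theorem pres2 (v : Fin 6 → ℕ) (x : Fin 4) (n : ℕ) (h : Mono6 v) : Mono6 (sg2n v x n) := by
  unfold Mono6 at *
  fin_cases x <;> simp [sg2n] <;> omega

theorem zero1 (v : Fin 4 → ℕ) (x : Fin 4) (h : Mono4 v) : sg1n v x 0 = v := by
  unfold Mono4 at *
  funext j
  fin_cases x <;> fin_cases j <;> simp [sg1n] <;> omega

theorem zero3 (v : Fin 4 → ℕ) (x : Fin 4) (h : Mono4 v) : sg3n v x 0 = v := by
  unfold Mono4 at *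
  funext j
  fin_cases x <;> fin_cases j <;> simp [sg3n] <;> omega

theorem zero2 (v : Fin 6 → ℕ) (x : Fin 4) (h : Mono6 v) : sg2n v x 0 = v := by
  unfold Mono6 at *
  funext j
  fin_cases x <;> fin_cases j <;> simp [sg2n] <;> omega

theorem succ1 (v : Fin 4 → ℕ) (x : Fin 4) (n : ℕ) : sg1n (sg1n v x n) x 1 = sg1n v x (n + 1) := by
  funext j
  fin_cases x <;> fin_cases j <;> simp [sg1n] <;> omega

theorem succ3 (v : Fin 4 → ℕ) (x : Fin 4) (n : ℕ) : sg3n (sg3n v x n) x 1 = sg3n v x (n + 1) := by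
  funext j
  fin_cases x <;> fin_cases j <;> simp [sg3n] <;> omega

theorem succ2 (v : Fin 6 → ℕ) (x : Fin 4) (n : ℕ) : sg2n (sg2n v x n) x 1 = sg2n v x (n + 1) := by
  funext j
  fin_cases x <;> fin_cases j <;> simp [sg2n] <;> omega

set_option maxHeartbeats 4000000 in
theorem knuthA1 (a b c : Fin 4) (h1 : a < b) (h2 : b ≤ c) (v : Fin 4 → ℕ) (h : Mono4 v) :
    sg1n (sg1n (sg1n v b 1) c 1) a 1 = sg1n (sg1n (sg1n v b 1) a 1) c 1 := by
  unfold Mono4 at h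
  fin_cases a <;> fin_cases b <;> fin_cases c <;> first
    | (exfalso; revert h1 h2; decide)
    | (funext j; fin_cases j <;> simp only [Fin.zero_eta, Fin.mk_one, Fin.reduceFinMk, e1] <;> grind)

set_option maxHeartbeats 4000000 in
theorem knuthB1 (a b c : Fin 4) (h1 : a ≤ b) (h2 : b < c) (v : Fin 4 → ℕ) (h : Mono4 v) :
    sg1n (sg1n (sg1n v c 1) a 1) b 1 = sg1n (sg1n (sg1n v a 1) c 1) b 1 := by
  unfold Mono4 at h
  fin_cases a <;> fin_cases b <;> fin_cases c <;> first
    | (exfalso; revert h1 h2; decide)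
    | (funext j; fin_cases j <;> simp only [Fin.zero_eta, Fin.mk_one, Fin.reduceFinMk, e1] <;> grind)

set_option maxHeartbeats 4000000 in
theorem knuthA3 (a b c : Fin 4) (h1 : a < b) (h2 : b ≤ c) (v : Fin 4 → ℕ) (h : Mono4 v) :
    sg3n (sg3n (sg3n v b 1) c 1) a 1 = sg3n (sg3n (sg3n v b 1) a 1) c 1 := by
  unfold Mono4 at h
  fin_cases a <;> fin_cases b <;> fin_cases c <;> first
    | (exfalso; revert h1 h2; decide)
    | (funext j; fin_cases j <;> simp only [Fin.zero_eta, Fin.mk_one, Fin.reduceFinMk, e3] <;> grind)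

set_option maxHeartbeats 4000000 in
theorem knuthB3 (a b c : Fin 4) (h1 : a ≤ b) (h2 : b < c) (v : Fin 4 → ℕ) (h : Mono4 v) :
    sg3n (sg3n (sg3n v c 1) a 1) b 1 = sg3n (sg3n (sg3n v a 1) c 1) b 1 := by
  unfold Mono4 at h
  fin_cases a <;> fin_cases b <;> fin_cases c <;> first
    | (exfalso; revert h1 h2; decide)
    | (funext j; fin_cases j <;> simp only [Fin.zero_eta, Fin.mk_one, Fin.reduceFinMk, e3] <;> grind)

set_option maxHeartbeats 4000000 in
theorem knuthA2 (a b c : Fin 4) (h1 : a < b) (h2 : b ≤ c) (v : Fin 6 → ℕ) (h : Mono6 v) :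
    sg2n (sg2n (sg2n v b 1) c 1) a 1 = sg2n (sg2n (sg2n v b 1) a 1) c 1 := by
  unfold Mono6 at h
  fin_cases a <;> fin_cases b <;> fin_cases c <;> first
    | (exfalso; revert h1 h2; decide)
    | (funext j; fin_cases j <;> simp only [Fin.zero_eta, Fin.mk_one, Fin.reduceFinMk, e2] <;> grind)

set_option maxHeartbeats 4000000 in
theorem knuthB2 (a b c : Fin 4) (h1 : a ≤ b) (h2 : b < c) (v : Fin 6 → ℕ) (h : Mono6 v) :
    sg2n (sg2n (sg2n v c 1) a 1) b 1 = sg2n (sg2n (sg2n v a 1) c 1) b 1 := by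
  unfold Mono6 at h
  fin_cases a <;> fin_cases b <;> fin_cases c <;> first
    | (exfalso; revert h1 h2; decide)
    | (funext j; fin_cases j <;> simp only [Fin.zero_eta, Fin.mk_one, Fin.reduceFinMk, e2] <;> grind)

/-! ### Tableaux: existence of normal forms -/

/-- A row with `g` ones, `h` twos, `i` threes and `j` fours. -/
def row (g h i j : ℕ) : FreeMonoid (Fin 4) :=
  FreeMonoid.of 0 ^ g * FreeMonoid.of 1 ^ h * FreeMonoid.of 2 ^ i * FreeMonoid.of 3 ^ j

/-- A letter in the plactic monoid. -/
def gn (x : Fin 4) : P4 := cls (FreeMonoid.of x)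

theorem gn_K1 {a b c : Fin 4} (h1 : a < b) (h2 : b ≤ c) : gn b * gn c * gn a = gn b * gn a * gn c := by
  unfold gn
  rw [← map_mul, ← map_mul, ← map_mul, ← map_mul]
  exact (Con.eq _).2 (ConGen.Rel.of _ _ (Or.inl ⟨a, b, c, h1, h2, rfl, rfl⟩))

theorem gn_K2 {a b c : Fin 4} (h1 : a ≤ b) (h2 : b < c) : gn c * gn a * gn b = gn a * gn c * gn b := by
  unfold gn
  rw [← map_mul, ← map_mul, ← map_mul, ← map_mul]
  exact (Con.eq _).2 (ConGen.Rel.of _ _ (Or.inr ⟨a, b, c, h1, h2, rfl, rfl⟩))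

/-- Product of a list of letters. -/
def lpr (l : List (Fin 4)) : P4 := (l.map gn).prod

theorem lpr_cons (x : Fin 4) (l : List (Fin 4)) : lpr (x :: l) = gn x * lpr l := by simp [lpr]
theorem lpr_append (l l' : List (Fin 4)) : lpr (l ++ l') = lpr l * lpr l' := by simp [lpr]

theorem moveL (x : Fin 4) (B : List (Fin 4)) (y : Fin 4) (hx : x < y)
    (hB : (y :: B).Pairwise (· ≤ ·)) : gn y * lpr B * gn x = gn y * gn x * lpr B := by
  induction B generalizing y with
  | nil => simp [lpr]
  | cons b B ih =>
    rw [List.pairwise_cons] at hB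
    have hyb : y ≤ b := hB.1 b (by simp)
    rw [lpr_cons, mul_assoc (gn y), ih b (lt_of_lt_of_le hx hyb) hB.2, ← mul_assoc, ← mul_assoc,
      gn_K1 hx hyb, mul_assoc, mul_assoc]

theorem moveR (y : Fin 4) (A : List (Fin 4)) (x : Fin 4) (hx : x < y)
    (hA : (A ++ [x]).Pairwise (· ≤ ·)) : lpr A * gn y * gn x = gn y * lpr A * gn x := by
  induction A using List.reverseRecOn generalizing x with
  | nil => simp [lpr]
  | append_singleton A a ih =>
    have hA' := hA
    rw [List.pairwise_append] at hA
    have hax : a ≤ x := hA.2.2 a (by simp) x (by simp)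
    have e : lpr (A ++ [a]) = lpr A * gn a := by rw [lpr_append, lpr_cons]; simp [lpr]
    rw [e]
    calc lpr A * gn a * gn y * gn x = lpr A * (gn a * gn y * gn x) := by simp only [mul_assoc]
      _ = lpr A * (gn y * gn a * gn x) := by rw [gn_K2 hax hx]
      _ = lpr A * gn y * gn a * gn x := by simp only [mul_assoc]
      _ = gn y * lpr A * gn a * gn x := by rw [ih a (lt_of_le_of_lt hax hx) hA.1]
      _ = _ := by simp only [mul_assoc]

theorem bump (A B : List (Fin 4)) (x y : Fin 4) (hx : x < y)
    (hA : (A ++ [x]).Pairwise (· ≤ ·)) (hB : (y :: B).Pairwise (· ≤ ·)) :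
    lpr A * gn y * lpr B * gn x = gn y * (lpr A * gn x * lpr B) := by
  calc lpr A * gn y * lpr B * gn x = lpr A * (gn y * lpr B * gn x) := by simp only [mul_assoc]
    _ = lpr A * gn y * gn x * lpr B := by rw [moveL x B y hx hB]; simp only [mul_assoc]
    _ = gn y * lpr A * gn x * lpr B := by rw [moveR y A x hx hA]
    _ = _ := by simp only [mul_assoc]

/-- Row as a list. -/
def rowL (g h i j : ℕ) : List (Fin 4) :=
  List.replicate g 0 ++ List.replicate h 1 ++ List.replicate i 2 ++ List.replicate j 3

theorem cls_row (g h i j : ℕ) : cls (row g h i j) = lpr (rowL g h i j) := by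
  simp [row, rowL, lpr, gn, mul_assoc]

theorem lpr_rep (n : ℕ) (x : Fin 4) : lpr (List.replicate n x) = gn x ^ n := by simp [lpr]

theorem lpr_nil : lpr [] = 1 := rfl

theorem cls_row' (g h i j : ℕ) : cls (row g h i j) = gn 0 ^ g * gn 1 ^ h * gn 2 ^ i * gn 3 ^ j := by
  simp [row, gn]

theorem ins3 (g h i j : ℕ) : cls (row g h i j) * gn 3 = cls (row g h i (j + 1)) := by
  rw [cls_row', cls_row', pow_succ]; simp only [mul_assoc]

theorem ins2 (g h i : ℕ) : cls (row g h i 0) * gn 2 = cls (row g h (i + 1) 0) := by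
  rw [cls_row', cls_row', pow_succ]; simp only [mul_assoc, pow_zero, mul_one]

theorem ins1 (g h : ℕ) : cls (row g h 0 0) * gn 1 = cls (row g (h + 1) 0 0) := by
  rw [cls_row', cls_row', pow_succ]; simp only [mul_assoc, pow_zero, mul_one]

theorem ins0 (g : ℕ) : cls (row g 0 0 0) * gn 0 = cls (row (g + 1) 0 0 0) := by
  rw [cls_row', cls_row', pow_succ]; simp only [mul_one, pow_zero]

theorem ins23 (g h i j : ℕ) :
    cls (row g h i (j + 1)) * gn 2 = gn 3 * cls (row g h (i + 1) j) := by
  have := bump (rowL g h i 0) (rowL 0 0 0 j) 2 3 (by decide)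
    (by simp +contextual [rowL, List.pairwise_append, List.mem_replicate, List.pairwise_replicate, or_imp])
    (by simp +contextual [rowL, List.pairwise_append, List.mem_replicate, List.pairwise_replicate, or_imp])
  simp only [← cls_row, cls_row', pow_zero, one_mul, mul_one] at this ⊢
  rw [pow_succ', pow_succ]
  simp only [mul_assoc] at this ⊢
  exact this

theorem ins12 (g h i j : ℕ) :
    cls (row g h (i + 1) j) * gn 1 = gn 2 * cls (row g (h + 1) i j) := by
  have := bump (rowL g h 0 0) (rowL 0 0 i j) 1 2 (by decide)
    (by simp +contextual [rowL, List.pairwise_append, List.mem_replicate, List.pairwise_replicate])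
    (by simp +contextual [rowL, List.pairwise_append, List.mem_replicate, List.pairwise_replicate, or_imp])
  simp only [← cls_row, cls_row', pow_zero, one_mul, mul_one] at this ⊢
  rw [pow_succ', pow_succ]
  simp only [mul_assoc] at this ⊢
  exact this

theorem ins13 (g h j : ℕ) :
    cls (row g h 0 (j + 1)) * gn 1 = gn 3 * cls (row g (h + 1) 0 j) := by
  have := bump (rowL g h 0 0) (rowL 0 0 0 j) 1 3 (by decide)
    (by simp +contextual [rowL, List.pairwise_append, List.mem_replicate, List.pairwise_replicate])
    (by simp +contextual [rowL, List.pairwise_append, List.mem_replicate, List.pairwise_replicate, or_imp])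
  simp only [← cls_row, cls_row', pow_zero, one_mul, mul_one] at this ⊢
  rw [pow_succ', pow_succ]
  simp only [mul_assoc] at this ⊢
  exact this

theorem ins01 (g h i j : ℕ) :
    cls (row g (h + 1) i j) * gn 0 = gn 1 * cls (row (g + 1) h i j) := by
  have := bump (rowL g 0 0 0) (rowL 0 h i j) 0 1 (by decide)
    (by simp +contextual [rowL, List.pairwise_append, List.mem_replicate, List.pairwise_replicate])
    (by simp +contextual [rowL, List.pairwise_append, List.mem_replicate, List.pairwise_replicate, or_imp])
  simp only [← cls_row, cls_row', pow_zero, one_mul, mul_one] at this ⊢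
  rw [pow_succ', pow_succ]
  simp only [mul_assoc] at this ⊢
  exact this

theorem ins02 (g i j : ℕ) :
    cls (row g 0 (i + 1) j) * gn 0 = gn 2 * cls (row (g + 1) 0 i j) := by
  have := bump (rowL g 0 0 0) (rowL 0 0 i j) 0 2 (by decide)
    (by simp +contextual [rowL, List.pairwise_append, List.mem_replicate, List.pairwise_replicate])
    (by simp +contextual [rowL, List.pairwise_append, List.mem_replicate, List.pairwise_replicate, or_imp])
  simp only [← cls_row, cls_row', pow_zero, one_mul, mul_one] at this ⊢
  rw [pow_succ', pow_succ]
  simp only [mul_assoc] at this ⊢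
  exact this

theorem ins03 (g j : ℕ) :
    cls (row g 0 0 (j + 1)) * gn 0 = gn 3 * cls (row (g + 1) 0 0 j) := by
  have := bump (rowL g 0 0 0) (rowL 0 0 0 j) 0 3 (by decide)
    (by simp +contextual [rowL, List.pairwise_append, List.mem_replicate, List.pairwise_replicate])
    (by simp +contextual [rowL, List.pairwise_append, List.mem_replicate, List.pairwise_replicate, or_imp])
  simp only [← cls_row, cls_row', pow_zero, one_mul, mul_one] at this ⊢
  rw [pow_succ', pow_succ]
  simp only [mul_assoc] at this ⊢
  exact this

/-- The tableau word with given row contents. -/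
def tab (a b c d e f g h i j : ℕ) : FreeMonoid (Fin 4) :=
  row 0 0 0 a * row 0 0 b c * row 0 d e f * row g h i j

/-- The column conditions of a semistandard tableau. -/
def Valid (a b c d e f g h i : ℕ) : Prop :=
  a ≤ b ∧ b ≤ d ∧ b + c ≤ d + e ∧ d ≤ g ∧ d + e ≤ g + h ∧ d + e + f ≤ g + h + i

/-- Tableaux with upper three rows multiplied by a letter: the set of elements of the form
`tab` in the plactic monoid. -/
def IsTab (p : P4) : Prop :=
  ∃ a b c d e f g h i j, Valid a b c d e f g h i ∧ p = cls (tab a b c d e f g h i j)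

theorem cls_tab (a b c d e f g h i j : ℕ) : cls (tab a b c d e f g h i j) =
    cls (row 0 0 0 a) * cls (row 0 0 b c) * cls (row 0 d e f) * cls (row g h i j) := by
  simp [tab]

theorem r2ins3 (a b c d e f : ℕ) (z : P4) :
    cls (row 0 0 0 a) * cls (row 0 0 b c) * cls (row 0 d e f) * (gn 3 * z) =
    cls (row 0 0 0 a) * cls (row 0 0 b c) * cls (row 0 d e (f + 1)) * z := by
  rw [← ins3 0 d e f]; simp only [mul_assoc]

theorem r2ins2 (a b c d e f : ℕ) (z : P4) : ∃ c' e' f',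
    cls (row 0 0 0 a) * cls (row 0 0 b c) * cls (row 0 d e f) * (gn 2 * z) =
    cls (row 0 0 0 a) * cls (row 0 0 b c') * cls (row 0 d e' f') * z ∧ e' = e + 1 ∧
    ((f = 0 ∧ f' = 0 ∧ c' = c) ∨ (f = f' + 1 ∧ c' = c + 1)) := by
  rcases f with _ | f
  · refine ⟨c, e + 1, 0, ?_, rfl, Or.inl ⟨rfl, rfl, rfl⟩⟩
    rw [← ins2 0 d e]; simp only [mul_assoc]
  · refine ⟨c + 1, e + 1, f, ?_, rfl, Or.inr ⟨rfl, rfl⟩⟩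
    rw [← ins3 0 0 b c]
    simp only [mul_assoc]
    rw [← mul_assoc (gn 3) _ z, ← ins23]
    simp only [mul_assoc]

theorem r3ins2 (a b c : ℕ) (z : P4) : ∃ a' c',
    cls (row 0 0 0 a) * cls (row 0 0 b c) * (gn 2 * z) =
    cls (row 0 0 0 a') * cls (row 0 0 (b + 1) c') * z ∧
    ((c = 0 ∧ c' = 0 ∧ a' = a) ∨ (c = c' + 1 ∧ a' = a + 1)) := by
  rcases c with _ | c
  · refine ⟨a, 0, ?_, Or.inl ⟨rfl, rfl, rfl⟩⟩
    rw [← ins2 0 0 b]; simp only [mul_assoc]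
  · refine ⟨a + 1, c, ?_, Or.inr ⟨rfl, rfl⟩⟩
    rw [← ins3 0 0 0 a]
    simp only [mul_assoc]
    rw [← mul_assoc (gn 3) _ z, ← ins23]
    simp only [mul_assoc]

theorem r3ins3 (a b c : ℕ) (z : P4) :
    cls (row 0 0 0 a) * cls (row 0 0 b c) * (gn 3 * z) =
    cls (row 0 0 0 a) * cls (row 0 0 b (c + 1)) * z := by
  rw [← ins3 0 0 b c]; simp only [mul_assoc]

theorem r2ins1 (a b c d e f : ℕ) (z : P4) : ∃ a' b' c' e' f',
    cls (row 0 0 0 a) * cls (row 0 0 b c) * cls (row 0 d e f) * (gn 1 * z) =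
    cls (row 0 0 0 a') * cls (row 0 0 b' c') * cls (row 0 (d + 1) e' f') * z ∧
    ((e = 0 ∧ f = 0 ∧ e' = 0 ∧ f' = 0 ∧ a' = a ∧ b' = b ∧ c' = c) ∨
     (e = 0 ∧ e' = 0 ∧ f = f' + 1 ∧ a' = a ∧ b' = b ∧ c' = c + 1) ∨
     (e = e' + 1 ∧ f = f' ∧ b' = b + 1 ∧
      ((c = 0 ∧ c' = 0 ∧ a' = a) ∨ (c = c' + 1 ∧ a' = a + 1)))) := by
  rcases e with _ | e
  · rcases f with _ | f
    · refine ⟨a, b, c, 0, 0, ?_, by simp⟩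
      rw [← ins1 0 d]; simp only [mul_assoc]
    · refine ⟨a, b, c + 1, 0, f, ?_, by simp⟩
      rw [mul_assoc _ _ (gn 1 * z), ← mul_assoc _ (gn 1) z, ins13, mul_assoc (gn 3), r3ins3]
      simp only [mul_assoc]
  · obtain ⟨a', c', h1, h2⟩ := r3ins2 a b c (cls (row 0 (d + 1) e f) * z)
    refine ⟨a', b + 1, c', e, f, ?_, by simpa using h2⟩
    rw [mul_assoc _ _ (gn 1 * z), ← mul_assoc _ (gn 1) z, ins12, mul_assoc (gn 2), h1]
    simp only [mul_assoc]

theorem isTab_mul (p : P4) (hp : IsTab p) (x : Fin 4) : IsTab (p * gn x) := by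
  obtain ⟨a, b, c, d, e, f, g, h, i, j, hv, rfl⟩ := hp
  unfold Valid at hv
  rw [cls_tab, mul_assoc]
  unfold IsTab
  simp only [cls_tab, Valid]
  fin_cases x
  · change ∃ a_1 b_1 c_1 d_1 e_1 f_1 g_1 h_1 i_1 j_1, _ ∧ _ * (_ * gn 0) = _
    rcases h with _ | h
    · rcases i with _ | i
      · rcases j with _ | j
        · exact ⟨a, b, c, d, e, f, g + 1, 0, 0, 0, by omega, by rw [ins0]⟩
        · exact ⟨a, b, c, d, e, f + 1, g + 1, 0, 0, j, by omega, by rw [ins03, r2ins3]⟩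
      · obtain ⟨c', e', f', h1, h2⟩ := r2ins2 a b c d e f (cls (row (g + 1) 0 i j))
        exact ⟨a, b, c', d, e', f', g + 1, 0, i, j, by omega, by rw [ins02, h1]⟩
    · obtain ⟨a', b', c', e', f', h1, h2⟩ := r2ins1 a b c d e f (cls (row (g + 1) h i j))
      exact ⟨a', b', c', d + 1, e', f', g + 1, h, i, j, by omega, by rw [ins01, h1]⟩
  · change ∃ a_1 b_1 c_1 d_1 e_1 f_1 g_1 h_1 i_1 j_1, _ ∧ _ * (_ * gn 1) = _
    rcases i with _ | i
    · rcases j with _ | j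
      · exact ⟨a, b, c, d, e, f, g, h + 1, 0, 0, by omega, by rw [ins1]⟩
      · exact ⟨a, b, c, d, e, f + 1, g, h + 1, 0, j, by omega, by rw [ins13, r2ins3]⟩
    · obtain ⟨c', e', f', h1, h2⟩ := r2ins2 a b c d e f (cls (row g (h + 1) i j))
      exact ⟨a, b, c', d, e', f', g, h + 1, i, j, by omega, by rw [ins12, h1]⟩
  · change ∃ a_1 b_1 c_1 d_1 e_1 f_1 g_1 h_1 i_1 j_1, _ ∧ _ * (_ * gn 2) = _
    rcases j with _ | j
    · exact ⟨a, b, c, d, e, f, g, h, i + 1, 0, by omega, by rw [ins2]⟩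
    · exact ⟨a, b, c, d, e, f + 1, g, h, i + 1, j, by omega, by rw [ins23, r2ins3]⟩
  · change ∃ a_1 b_1 c_1 d_1 e_1 f_1 g_1 h_1 i_1 j_1, _ ∧ _ * (_ * gn 3) = _
    exact ⟨a, b, c, d, e, f, g, h, i, j + 1, by omega, by rw [ins3]⟩

theorem isTab_cls (W : FreeMonoid (Fin 4)) : IsTab (cls W) := by
  suffices H : ∀ l : List (Fin 4), IsTab (cls (FreeMonoid.ofList l)) from H W.toList
  intro l
  induction l using List.reverseRecOn with
  | nil =>
    refine ⟨0, 0, 0, 0, 0, 0, 0, 0, 0, 0, by simp [Valid], ?_⟩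
    simp [tab, row]
  | append_singleton l x ih =>
    rw [FreeMonoid.ofList_append, FreeMonoid.ofList_singleton, map_mul]
    exact isTab_mul _ ih x

/-! ### Reading a tableau off the automata -/

theorem act_row {S : Type} {σ : S → Fin 4 → ℕ → S} {Mono : S → Prop}
    (pres : ∀ v x n, Mono v → Mono (σ v x n)) (h0 : ∀ v x, Mono v → σ v x 0 = v)
    (hs : ∀ v x n, σ (σ v x n) x 1 = σ v x (n + 1)) (v : S) (hv : Mono v) (g h i j : ℕ) :
    act (fun v x => σ v x 1) v (row g h i j) = σ (σ (σ (σ v 0 g) 1 h) 2 i) 3 j ∧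
      Mono (act (fun v x => σ v x 1) v (row g h i j)) := by
  refine ⟨?_, act_mono (fun v x hv => pres v x 1 hv) _ _ hv⟩
  rw [row, act_mul, act_mul, act_mul, act_pow h0 hs _ hv,
    act_pow h0 hs _ (pres _ _ _ hv), act_pow h0 hs _ (pres _ _ _ (pres _ _ _ hv)),
    act_pow h0 hs _ (pres _ _ _ (pres _ _ _ (pres _ _ _ hv)))]

theorem act_tab {S : Type} (σ : S → Fin 4 → ℕ → S) (Mono : S → Prop)
    (pres : ∀ v x n, Mono v → Mono (σ v x n)) (h0 : ∀ v x, Mono v → σ v x 0 = v)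
    (hs : ∀ v x n, σ (σ v x n) x 1 = σ v x (n + 1)) (v : S) (hv : Mono v)
    (a b c d e f g h i j : ℕ) :
    ∃ w1 w2 w3 : S, w1 = σ v 3 a ∧ w2 = σ (σ w1 2 b) 3 c ∧ w3 = σ (σ (σ w2 1 d) 2 e) 3 f ∧
    act (fun v x => σ v x 1) v (tab a b c d e f g h i j) =
      σ (σ (σ (σ w3 0 g) 1 h) 2 i) 3 j := by
  have m1 := act_row pres h0 hs v hv 0 0 0 a
  have m2 := act_row pres h0 hs _ m1.2 0 0 b c
  have m3 := act_row pres h0 hs _ m2.2 0 d e f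
  have m4 := act_row pres h0 hs _ m3.2 g h i j
  refine ⟨act (fun v x => σ v x 1) v (row 0 0 0 a),
    act (fun v x => σ v x 1) (act (fun v x => σ v x 1) v (row 0 0 0 a)) (row 0 0 b c),
    act (fun v x => σ v x 1) (act (fun v x => σ v x 1)
      (act (fun v x => σ v x 1) v (row 0 0 0 a)) (row 0 0 b c)) (row 0 d e f), ?_, ?_, ?_, ?_⟩
  · rw [m1.1, h0 v 0 hv, h0 v 1 hv, h0 v 2 hv]
  · rw [m2.1, h0 _ 0 m1.2, h0 _ 1 m1.2]
  · rw [m3.1, h0 _ 0 m2.2]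
  · rw [tab, act_mul, act_mul, act_mul, m4.1]

theorem tab1 (a b c d e f g h i j : ℕ) (hv : Valid a b c d e f g h i) :
    let w := act (fun v x => sg1n v x 1) (fun _ => 0) (tab a b c d e f g h i j)
    w 0 = g ∧ w 1 = g + h ∧ w 2 = g + h + i ∧ w 3 = g + h + i + j := by
  unfold Valid at hv
  obtain ⟨w1, w2, w3, h1, h2, h3, h4⟩ := act_tab sg1n Mono4 pres1 zero1 succ1 (fun _ => 0)
    (by simp [Mono4]) a b c d e f g h i j
  have p1 : w1 0 = 0 ∧ w1 1 = 0 ∧ w1 2 = 0 ∧ w1 3 = a := by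
    subst h1; simp only [e1, Nat.zero_add]; simp
  clear h1
  have p2 : w2 0 = 0 ∧ w2 1 = 0 ∧ w2 2 = b ∧ w2 3 = b + c := by
    subst h2; simp only [e1, p1, true_and, and_true]; omega
  clear h2 p1
  have p3 : w3 0 = 0 ∧ w3 1 = d ∧ w3 2 = d + e ∧ w3 3 = d + e + f := by
    subst h3; simp only [e1, p2, true_and, and_true]; omega
  clear h3 p2
  dsimp only
  rw [h4]
  simp only [e1, p3, true_and, and_true]
  omega

theorem tab3 (a b c d e f g h i j : ℕ) (hv : Valid a b c d e f g h i) :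
    let w := act (fun v x => sg3n v x 1) (fun _ => 0) (tab a b c d e f g h i j)
    w 0 = g + d + h + b + e + i ∧ w 3 = b + c + d + e + f + g + h + i + j := by
  unfold Valid at hv
  obtain ⟨w1, w2, w3, h1, h2, h3, h4⟩ := act_tab sg3n Mono4 pres3 zero3 succ3 (fun _ => 0)
    (by simp [Mono4]) a b c d e f g h i j
  have p1 : w1 0 = 0 ∧ w1 1 = a ∧ w1 2 = a ∧ w1 3 = a := by
    subst h1; simp only [e3, Nat.zero_add]; simp
  clear h1
  have p2 : w2 0 = b ∧ w2 1 = b + c ∧ w2 2 = a + b + c ∧ w2 3 = a + b + c := by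
    subst h2; simp only [e3, p1, true_and, and_true]; omega
  clear h2 p1
  have p3 : w3 0 = b + d + e ∧ w3 1 = max (b + c + d) (b + d + e) + f ∧ w3 2 = b + c + d + e + f ∧ w3 3 = a + b + c + d + e + f := by
    subst h3; simp only [e3, p2, true_and, and_true]; omega
  clear h3 p2
  dsimp only
  rw [h4]
  simp only [e3, p3, true_and, and_true]
  omega

theorem tab2 (a b c d e f g h i j : ℕ) (hv : Valid a b c d e f g h i) :
    let w := act (fun v x => sg2n v x 1) (fun _ => 0) (tab a b c d e f g h i j)
    w 0 = d + g + h ∧ w 3 = d + e + g + h + i ∧ w 5 = d + e + f + g + h + i + j := by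
  unfold Valid at hv
  obtain ⟨w1, w2, w3, h1, h2, h3, h4⟩ := act_tab sg2n Mono6 pres2 zero2 succ2 (fun _ => 0)
    (by simp [Mono6]) a b c d e f g h i j
  have p1 : w1 0 = 0 ∧ w1 1 = 0 ∧ w1 2 = a ∧ w1 3 = 0 ∧ w1 4 = a ∧ w1 5 = a := by
    subst h1; simp only [e2, Nat.zero_add]; simp
  clear h1
  have p2 : w2 0 = 0 ∧ w2 1 = b ∧ w2 2 = b + c ∧ w2 3 = b ∧ w2 4 = b + c ∧ w2 5 = a + b + c := by
    subst h2; simp only [e2, p1, true_and, and_true]; omega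
  clear h2 p1
  have p3 : w3 0 = d ∧ w3 1 = d + e ∧ w3 2 = d + e + f ∧ w3 3 = b + d + e ∧ w3 4 = max (b + c + d) (b + d + e) + f ∧ w3 5 = b + c + d + e + f := by
    subst h3; simp only [e2, p2, true_and, and_true]; omega
  clear h3 p2
  dsimp only
  rw [h4]
  simp only [e2, p3, true_and, and_true]
  omega

theorem tab4 (a b c d e f g h i j : ℕ) :
    act (fun v x => sg4n v x 1) 0 (tab a b c d e f g h i j) =
      a + b + c + d + e + f + g + h + i + j := by
  obtain ⟨w1, w2, w3, h1, h2, h3, h4⟩ := act_tab sg4n (fun _ => True) (fun _ _ _ _ => trivial)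
    (fun _ _ _ => rfl) (fun _ _ _ => rfl) 0 trivial a b c d e f g h i j
  rw [h4, h3, h2, h1]
  simp only [sg4n]
  omega

theorem cls_eq_of_inv (W W' : FreeMonoid (Fin 4))
    (h1 : act (fun v x => sg1n v x 1) (fun _ => 0) W = act (fun v x => sg1n v x 1) (fun _ => 0) W')
    (h2 : act (fun v x => sg2n v x 1) (fun _ => 0) W = act (fun v x => sg2n v x 1) (fun _ => 0) W')
    (h3 : act (fun v x => sg3n v x 1) (fun _ => 0) W = act (fun v x => sg3n v x 1) (fun _ => 0) W')
    (h4 : act (fun v x => sg4n v x 1) 0 W = act (fun v x => sg4n v x 1) 0 W') :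
    cls W = cls W' := by
  have z4 : Mono4 (fun _ => 0) := by simp [Mono4]
  have z6 : Mono6 (fun _ => 0) := by simp [Mono6]
  have k1 : ∀ {V V' : FreeMonoid (Fin 4)}, cls V = cls V' →
      act (fun v x => sg1n v x 1) (fun _ => 0) V = act (fun v x => sg1n v x 1) (fun _ => 0) V' :=
    fun hV => act_knuth (fun v x => pres1 v x 1) knuthA1 knuthB1 hV _ z4
  have k2 : ∀ {V V' : FreeMonoid (Fin 4)}, cls V = cls V' →
      act (fun v x => sg2n v x 1) (fun _ => 0) V = act (fun v x => sg2n v x 1) (fun _ => 0) V' :=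
    fun hV => act_knuth (fun v x => pres2 v x 1) knuthA2 knuthB2 hV _ z6
  have k3 : ∀ {V V' : FreeMonoid (Fin 4)}, cls V = cls V' →
      act (fun v x => sg3n v x 1) (fun _ => 0) V = act (fun v x => sg3n v x 1) (fun _ => 0) V' :=
    fun hV => act_knuth (fun v x => pres3 v x 1) knuthA3 knuthB3 hV _ z4
  have k4 : ∀ {V V' : FreeMonoid (Fin 4)}, cls V = cls V' →
      act (fun v x => sg4n v x 1) 0 V = act (fun v x => sg4n v x 1) 0 V' :=
    fun hV => act_knuth (Mono := fun _ => True) (fun _ _ _ => trivial)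
      (fun _ _ _ _ _ _ _ => rfl) (fun _ _ _ _ _ _ _ => rfl) hV 0 trivial
  obtain ⟨a, b, c, d, e, f, g, h, i, j, hv, hW⟩ := isTab_cls W
  obtain ⟨a', b', c', d', e', f', g', h', i', j', hv', hW'⟩ := isTab_cls W'
  have t1 := tab1 a b c d e f g h i j hv
  have t2 := tab2 a b c d e f g h i j hv
  have t3 := tab3 a b c d e f g h i j hv
  have t4 := tab4 a b c d e f g h i j
  have s1 := tab1 a' b' c' d' e' f' g' h' i' j' hv'
  have s2 := tab2 a' b' c' d' e' f' g' h' i' j' hv'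
  have s3 := tab3 a' b' c' d' e' f' g' h' i' j' hv'
  have s4 := tab4 a' b' c' d' e' f' g' h' i' j'
  rw [← k1 hW, h1] at t1
  rw [← k2 hW, h2] at t2
  rw [← k3 hW, h3] at t3
  rw [← k4 hW, h4] at t4
  rw [← k1 hW'] at s1
  rw [← k2 hW'] at s2
  rw [← k3 hW'] at s3
  rw [← k4 hW'] at s4
  dsimp only at t1 t2 t3 s1 s2 s3
  have q : a = a' ∧ b = b' ∧ c = c' ∧ d = d' ∧ e = e' ∧ f = f' ∧ g = g' ∧ h = h' ∧ i = i' ∧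
      j = j' := by omega
  obtain ⟨rfl, rfl, rfl, rfl, rfl, rfl, rfl, rfl, rfl, rfl⟩ := q
  exact hW.trans hW'.symm

/-- If `u[ab,ba] = v[ab,ba]` is a semigroup identity satisfied by `UT₄(𝕋)`, then
the identity `abuab[ab,ba] = abvab[ab,ba]` is satisfied by the plactic monoid
`P₄`. -/
theorem stmt19 (u v : List Bool)
    (hne : subst u [true, false] [false, true] ≠ subst v [true, false] [false, true])
    (hUT4 : ∀ X Y : Matrix (Fin 4) (Fin 4) Trop, IsUT X → IsUT Y →
      evalWord (subst u [true, false] [false, true]) X Y =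
        evalWord (subst v [true, false] [false, true]) X Y) :
    ∀ x y : P4,
      evalM (subst ([true, false] ++ u ++ [true, false]) [true, false] [false, true]) x y =
      evalM (subst ([true, false] ++ v ++ [true, false]) [true, false] [false, true]) x y := by
  have H : HypUT4 u v := by
    intro X Y hX hY
    have := hUT4 X Y hX hY
    rw [evalWord_eq, evalWord_eq, evalM_subst, evalM_subst] at this
    exact this
  intro x y
  obtain ⟨X, rfl⟩ := Con.mk'_surjective x
  obtain ⟨Y, rfl⟩ := Con.mk'_surjective y
  rw [evalM_long, evalM_long]
  change longW u (cls X) (cls Y) = longW v (cls X) (cls Y)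
  rw [← longW_map, ← longW_map]
  exact cls_eq_of_inv _ _ (inv1 H X Y) (inv2 H X Y) (inv3 H X Y) (inv4 H X Y)
end
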